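/- arXiv:2506.22421 — 3 statements merged into one kernel-verified Lean document; each statement's English description precedes it below -/
import Mathlib

section
/- Let p ≥ 1 and let μ, ν be Borel probability measures on ℝ^{dT} with ∫ |x|_p^p dμ < ∞ and ∫ |x|_p^p dν < ∞. Suppose c_2, …, c_T ≥ 0 are constants such that for every t = 2, …, T and ν_{1:t−1}-almost every x_{1:t−1}, ∫ |x̃_t|_p^p ν_{x_{1:t−1}}(dx̃_t) ≤ c_t · (1 + |x_{1:t−1}|_p^p). Then ATV_p(μ, ν)^p ≤ (1 + 2 Σ_{t=1}^{T−1} ∏_{s=t+1}^{T} (1 + c_s)) · TV_p(μ, ν)^p. -/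
open MeasureTheory ProbabilityTheory
open scoped ENNReal

noncomputable section

/-- The path space `ℝ^{dT}`: `T` time steps with state space `ℝ^d`. -/
abbrev Traj (d T : ℕ) : Type := Fin T → Fin d → ℝ

/-- Restriction of a path to its first `t` coordinates. -/
def restr (d : ℕ) {t T : ℕ} (h : t ≤ T) (x : Traj d T) : Traj d t :=
  fun i => x (Fin.castLE h i)

lemma measurable_restr (d : ℕ) {t T : ℕ} (h : t ≤ T) : Measurable (restr d h) :=
  measurable_pi_lambda _ (fun i => measurable_pi_apply _)

/-- σ-algebra generated by the first `t` coordinates of the first component. -/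
def sigmaX (d T : ℕ) {t : ℕ} (h : t ≤ T) : MeasurableSpace (Traj d T × Traj d T) :=
  MeasurableSpace.comap (fun ω => restr d h ω.1) inferInstance

/-- σ-algebra generated by the first `t` coordinates of the second component. -/
def sigmaY (d T : ℕ) {t : ℕ} (h : t ≤ T) : MeasurableSpace (Traj d T × Traj d T) :=
  MeasurableSpace.comap (fun ω => restr d h ω.2) inferInstance

lemma sigmaX_le (d T : ℕ) {t : ℕ} (h : t ≤ T) :
    sigmaX d T h ≤ (inferInstance : MeasurableSpace (Traj d T × Traj d T)) :=
  ((measurable_restr d h).comp measurable_fst).comap_le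

lemma sigmaY_le (d T : ℕ) {t : ℕ} (h : t ≤ T) :
    sigmaY d T h ≤ (inferInstance : MeasurableSpace (Traj d T × Traj d T)) :=
  ((measurable_restr d h).comp measurable_snd).comap_le

/-- A coupling `π` of two laws on the path space is *bicausal* if for each `t < T`,
`σ(Y_1,…,Y_t)` is conditionally independent of `σ(X_1,…,X_T)` given `σ(X_1,…,X_t)`, and
symmetrically. -/
def IsBicausal (d T : ℕ) (π : Measure (Traj d T × Traj d T)) [IsFiniteMeasure π] : Prop :=
  ∀ t, 1 ≤ t → ∀ h : t + 1 ≤ T,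
    CondIndep (sigmaX d T (Nat.le_of_succ_le h)) (sigmaY d T (Nat.le_of_succ_le h))
      (sigmaX d T (le_refl T)) (sigmaX_le d T (Nat.le_of_succ_le h)) π ∧
    CondIndep (sigmaY d T (Nat.le_of_succ_le h)) (sigmaX d T (Nat.le_of_succ_le h))
      (sigmaY d T (le_refl T)) (sigmaY_le d T (Nat.le_of_succ_le h)) π

/-- The set of couplings of `μ` and `ν`. -/
def Cpl {α : Type*} [MeasurableSpace α] (μ ν : Measure α) : Set (Measure (α × α)) :=
  {π | IsProbabilityMeasure π ∧ π.map Prod.fst = μ ∧ π.map Prod.snd = ν}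

/-- The set of bicausal couplings of `μ` and `ν`. -/
def BCpl {d T : ℕ} (μ ν : Measure (Traj d T)) : Set (Measure (Traj d T × Traj d T)) :=
  {π | π ∈ Cpl μ ν ∧ ∃ _ : IsFiniteMeasure π, IsBicausal d T π}

/-- Weighted total variation distance. -/
def TVw {d T : ℕ} (w : Traj d T → ℝ) (μ ν : Measure (Traj d T)) : ℝ≥0∞ :=
  ⨅ π ∈ Cpl μ ν, ∫⁻ q in {q : Traj d T × Traj d T | q.1 ≠ q.2},
    (ENNReal.ofReal (w q.1) + ENNReal.ofReal (w q.2)) ∂π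

/-- Weighted adapted total variation distance. -/
def ATVw {d T : ℕ} (w : Traj d T → ℝ) (μ ν : Measure (Traj d T)) : ℝ≥0∞ :=
  ⨅ π ∈ BCpl μ ν, ∫⁻ q in {q : Traj d T × Traj d T | q.1 ≠ q.2},
    (ENNReal.ofReal (w q.1) + ENNReal.ofReal (w q.2)) ∂π

/-- `p`-th power of the adapted Wasserstein distance (cost `|x-y|_p^p`). -/
def AWpow (p : ℝ) {d T : ℕ} (μ ν : Measure (Traj d T)) : ℝ≥0∞ :=
  ⨅ π ∈ BCpl μ ν, ∫⁻ q, ENNReal.ofReal (∑ i, ∑ j, |q.1 i j - q.2 i j| ^ p) ∂π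

/-- The weight `w_p(x) = 1 + |x|_p^p`. -/
def wp (p : ℝ) {d T : ℕ} (x : Traj d T) : ℝ := 1 + ∑ i, ∑ j, |x i j| ^ p

section Kernels

variable {X E : Type*} [MeasurableSpace X] [MeasurableSpace E]

/-- Two finite kernels have a common part `γ`, which dominates the first one on a jointly
measurable set and the second one on its complement. -/
lemma exists_common_part_kernel [MeasurableSpace.CountableOrCountablyGenerated X E]
    (k l : Kernel X E) [IsFiniteKernel k] [IsFiniteKernel l] :
    ∃ (H : Set (X × E)) (γ k' l' : Kernel X E), MeasurableSet H ∧ k = γ + k' ∧ l = γ + l' ∧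
      (∀ x A, MeasurableSet A → A ⊆ Prod.mk x ⁻¹' H → k x A ≤ γ x A) ∧
      (∀ x A, MeasurableSet A → A ⊆ Prod.mk x ⁻¹' Hᶜ → l x A ≤ γ x A) := by
  have ham : Measurable (Function.uncurry (k.rnDeriv (k + l))) :=
    Kernel.measurable_rnDeriv k (k + l)
  have hbm : Measurable (Function.uncurry (l.rnDeriv (k + l))) :=
    Kernel.measurable_rnDeriv l (k + l)
  set a := k.rnDeriv (k + l)
  set b := l.rnDeriv (k + l)
  have hk : k = (k + l).withDensity a := by
    ext1 x
    refine (Kernel.withDensity_rnDeriv_eq ?_).symm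
    exact (Measure.le_add_right le_rfl).absolutelyContinuous
  have hl : l = (k + l).withDensity b := by
    ext1 x
    refine (Kernel.withDensity_rnDeriv_eq ?_).symm
    exact (Measure.le_add_left le_rfl).absolutelyContinuous
  have hmin : Measurable (Function.uncurry fun x z => min (a x z) (b x z)) := ham.min hbm
  have hab : Measurable (Function.uncurry fun x z => a x z - b x z) := ham.sub hbm
  have hba : Measurable (Function.uncurry fun x z => b x z - a x z) := hbm.sub ham
  refine ⟨{q | a q.1 q.2 ≤ b q.1 q.2}, (k + l).withDensity (fun x z => min (a x z) (b x z)),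
    (k + l).withDensity (fun x z => a x z - b x z), (k + l).withDensity (fun x z => b x z - a x z),
    measurableSet_le ham hbm, ?_, ?_, ?_, ?_⟩
  · rw [← Kernel.withDensity_add_right hmin hab]
    conv_lhs => rw [hk]
    congr 1
    ext x z
    simp only [Pi.add_apply]
    rcases le_total (a x z) (b x z) with h | h
    · simp [h, tsub_eq_zero_of_le]
    · simp [h, add_tsub_cancel_of_le]
  · rw [← Kernel.withDensity_add_right hmin hba]
    conv_lhs => rw [hl]
    congr 1
    ext x z
    simp only [Pi.add_apply]
    rcases le_total (a x z) (b x z) with h | h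
    · simp [h, add_tsub_cancel_of_le]
    · simp [h, tsub_eq_zero_of_le]
  · intro x A hA hAH
    conv_lhs => rw [hk]
    rw [Kernel.withDensity_apply' _ ham, Kernel.withDensity_apply' _ hmin]
    refine setLIntegral_mono' hA fun z hz => ?_
    exact le_min le_rfl (hAH hz)
  · intro x A hA hAH
    conv_lhs => rw [hl]
    rw [Kernel.withDensity_apply' _ hbm, Kernel.withDensity_apply' _ hmin]
    refine setLIntegral_mono' hA fun z hz => ?_
    exact le_min (le_of_not_ge (hAH hz)) le_rfl

/-- Coupling of two Markov kernels that, on the diagonal, keeps their common part `γ` together. -/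
lemma exists_coupling_kernel [MeasurableEq X]
    (k l γ k' l' : Kernel X E) [IsMarkovKernel k] [IsMarkovKernel l]
    (hk : k = γ + k') (hl : l = γ + l') :
    ∃ K : Kernel (X × X) (E × E), IsMarkovKernel K ∧
      (∀ q, (K q).map Prod.fst = k q.1) ∧ (∀ q, (K q).map Prod.snd = l q.2) ∧
      ∀ x, (γ x).map (fun z => (z, z)) ≤ K (x, x) := by
  classical
  have hk'le : ∀ x, k' x ≤ k x := fun x => by rw [hk]; exact Measure.le_add_left le_rfl
  have hl'le : ∀ x, l' x ≤ l x := fun x => by rw [hl]; exact Measure.le_add_left le_rfl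
  have hγle : ∀ x, γ x ≤ k x := fun x => by rw [hk]; exact Measure.le_add_right le_rfl
  have hk'f : ∀ x, IsFiniteMeasure (k' x) := fun x => isFiniteMeasure_of_le _ (hk'le x)
  have hl'f : ∀ x, IsFiniteMeasure (l' x) := fun x => isFiniteMeasure_of_le _ (hl'le x)
  have hγf : ∀ x, IsFiniteMeasure (γ x) := fun x => isFiniteMeasure_of_le _ (hγle x)
  have : IsFiniteKernel k' :=
    ⟨1, ENNReal.one_lt_top, fun x => (hk'le x Set.univ).trans prob_le_one⟩
  have : IsFiniteKernel l' :=
    ⟨1, ENNReal.one_lt_top, fun x => (hl'le x Set.univ).trans prob_le_one⟩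
  have hmass : ∀ x, k' x Set.univ = l' x Set.univ := by
    intro x
    have h1 : γ x Set.univ + k' x Set.univ = γ x Set.univ + l' x Set.univ := by
      have h1 : k x Set.univ = 1 := measure_univ
      have h2 : l x Set.univ = 1 := measure_univ
      rw [hk] at h1
      rw [hl] at h2
      simpa using h1.trans h2.symm
    exact (ENNReal.add_right_inj (measure_ne_top _ _)).1 h1
  let δ : X → ℝ≥0∞ := fun x => (l' x Set.univ)⁻¹
  have hδ : Measurable δ := (l'.measurable_coe MeasurableSet.univ).inv
  have hδ' : Measurable (Function.uncurry fun (x : X) (_ : E × E) => δ x) := hδ.comp measurable_fst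
  let M : Kernel X (E × E) := γ.map (fun z => (z, z)) +
    (k' ×ₖ l').withDensity (fun x _ => δ x)
  have hdiag : Measurable fun z : E => (z, z) := by fun_prop
  have hM : ∀ x, M x = (γ x).map (fun z => (z, z)) + δ x • (k' x).prod (l' x) := by
    intro x
    simp only [M, add_apply]
    rw [Kernel.map_apply _ hdiag, Kernel.withDensity_apply _ hδ',
      withDensity_const, Kernel.prod_apply]
  have hMfst : ∀ x, (M x).map Prod.fst = k x := by
    intro x
    rw [hM, Measure.map_add _ _ measurable_fst, Measure.map_smul,
      Measure.map_map measurable_fst hdiag, Measure.map_fst_prod, smul_smul, hk, add_apply]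
    congr 1
    · exact Measure.map_id
    · by_cases h0 : l' x Set.univ = 0
      · have : k' x = 0 := by rw [← Measure.measure_univ_eq_zero, hmass, h0]
        simp [this]
      · rw [ENNReal.inv_mul_cancel h0 (measure_ne_top _ _), one_smul]
  have hMsnd : ∀ x, (M x).map Prod.snd = l x := by
    intro x
    rw [hM, Measure.map_add _ _ measurable_snd, Measure.map_smul,
      Measure.map_map measurable_snd hdiag, Measure.map_snd_prod, smul_smul, hl, add_apply]
    congr 1
    · exact Measure.map_id
    · by_cases h0 : l' x Set.univ = 0
      · have : l' x = 0 := by rw [← Measure.measure_univ_eq_zero, h0]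
        simp [this]
      · rw [hmass, ENNReal.inv_mul_cancel h0 (measure_ne_top _ _), one_smul]
  let K : Kernel (X × X) (E × E) := Kernel.piecewise (s := {q : X × X | q.1 = q.2})
    (measurableSet_eq_fun measurable_fst measurable_snd)
    (M.comap Prod.fst measurable_fst)
    (k.comap Prod.fst measurable_fst ×ₖ l.comap Prod.snd measurable_snd)
  have hK1 : ∀ x, K (x, x) = M x := fun x => by simp [K, Kernel.piecewise_apply]
  have hK2 : ∀ x y, x ≠ y → K (x, y) = (k x).prod (l y) := fun x y h => by
    simp [K, Kernel.piecewise_apply, h, Kernel.prod_apply]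
  have hfst : ∀ q, (K q).map Prod.fst = k q.1 := by
    rintro ⟨x, y⟩
    by_cases h : x = y
    · subst h; rw [hK1, hMfst]
    · rw [hK2 x y h, Measure.map_fst_prod]; simp
  refine ⟨K, ⟨fun q => ⟨?_⟩⟩, hfst, ?_, ?_⟩
  · have : (K q).map Prod.fst Set.univ = 1 := by rw [hfst]; exact measure_univ
    rwa [Measure.map_apply measurable_fst MeasurableSet.univ] at this
  · rintro ⟨x, y⟩
    by_cases h : x = y
    · subst h; rw [hK1, hMsnd]
    · rw [hK2 x y h, Measure.map_snd_prod]; simp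
  · intro x
    rw [hK1, hM]
    exact Measure.le_add_right le_rfl

end Kernels

section Diagonal

/-- The part of a measure on a product carried by the diagonal, as a measure on the factor. -/
def diagPart {α : Type*} [MeasurableSpace α] (π : Measure (α × α)) : Measure α :=
  (π.restrict {q | q.1 = q.2}).map Prod.fst

variable {X E Y : Type*} [MeasurableSpace X] [MeasurableSpace E] [MeasurableSpace Y]

lemma measurableSet_diag [MeasurableEq X] : MeasurableSet {q : X × X | q.1 = q.2} :=
  measurableSet_eq_fun measurable_fst measurable_snd

instance {π : Measure (X × X)} [IsFiniteMeasure π] : IsFiniteMeasure (diagPart π) := by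
  unfold diagPart; infer_instance

lemma map_snd_restrict_diag [MeasurableEq X] (π : Measure (X × X)) :
    (π.restrict {q | q.1 = q.2}).map Prod.snd = diagPart π := by
  refine Measure.map_congr ?_
  filter_upwards [ae_restrict_mem measurableSet_diag] with q hq
  exact Eq.symm hq

lemma diagPart_add_map_fst [MeasurableEq X] (π : Measure (X × X)) :
    diagPart π + (π.restrict {q | q.1 ≠ q.2}).map Prod.fst = π.map Prod.fst := by
  rw [diagPart, ← Measure.map_add _ _ measurable_fst]
  congr 1
  exact Measure.restrict_add_restrict_compl measurableSet_diag

lemma diagPart_add_map_snd [MeasurableEq X] (π : Measure (X × X)) :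
    diagPart π + (π.restrict {q | q.1 ≠ q.2}).map Prod.snd = π.map Prod.snd := by
  rw [← map_snd_restrict_diag, ← Measure.map_add _ _ measurable_snd]
  congr 1
  exact Measure.restrict_add_restrict_compl measurableSet_diag

lemma lintegral_offDiag (π : Measure (X × X)) {w : X → ℝ≥0∞} (hw : Measurable w) :
    ∫⁻ q in {q : X × X | q.1 ≠ q.2}, (w q.1 + w q.2) ∂π =
      ∫⁻ x, w x ∂((π.restrict {q | q.1 ≠ q.2}).map Prod.fst) +
      ∫⁻ x, w x ∂((π.restrict {q | q.1 ≠ q.2}).map Prod.snd) := by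
  rw [lintegral_map hw measurable_fst, lintegral_map hw measurable_snd]
  exact lintegral_add_left (hw.comp measurable_fst) _

/-- Mass on the diagonal that a kernel keeps on the diagonal stays there. -/
lemma compProd_diagPart_map_le [MeasurableEq X] [MeasurableEq Y]
    (π : Measure (X × X)) [IsFiniteMeasure π] (K : Kernel (X × X) (E × E)) [IsMarkovKernel K]
    (γ : Kernel X E) [IsFiniteKernel γ] (hγ : ∀ x, (γ x).map (fun z => (z, z)) ≤ K (x, x))
    {e : X × E → Y} (he : Measurable e) :
    (diagPart π ⊗ₘ γ).map e ≤
      diagPart ((π ⊗ₘ K).map fun q => (e (q.1.1, q.2.1), e (q.1.2, q.2.2))) := by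
  have hF : Measurable fun q : (X × X) × (E × E) => (e (q.1.1, q.2.1), e (q.1.2, q.2.2)) := by
    fun_prop
  refine Measure.le_iff.2 fun A hA => ?_
  have hA' : MeasurableSet ((Prod.fst ⁻¹' A) ∩ {q : Y × Y | q.1 = q.2}) :=
    (measurable_fst hA).inter measurableSet_diag
  rw [diagPart, diagPart, Measure.map_apply measurable_fst hA,
    Measure.restrict_apply (measurable_fst hA), Measure.map_apply hF hA',
    Measure.compProd_apply (hF hA'), Measure.map_apply he hA, Measure.compProd_apply (he hA),
    lintegral_map (Kernel.measurable_kernel_prodMk_left (he hA)) measurable_fst]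
  refine le_trans (setLIntegral_mono' measurableSet_diag ?_) (setLIntegral_le_lintegral _ _)
  rintro ⟨x, y⟩ (rfl : x = y)
  have hm : MeasurableSet (Prod.mk (x, x) ⁻¹'
      ((fun q : (X × X) × (E × E) => (e (q.1.1, q.2.1), e (q.1.2, q.2.2))) ⁻¹'
        ((Prod.fst ⁻¹' A) ∩ {q : Y × Y | q.1 = q.2}))) := measurable_prodMk_left (hF hA')
  refine le_trans (le_of_eq ?_) (hγ x _)
  rw [Measure.map_apply (by fun_prop) hm]
  congr 1
  ext z
  simp

/-- If `η'` lies below both `(η + α) ⊗ₘ k` and `(η + β) ⊗ₘ l`, then, up to an error propagated by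
`l`, it lies below the composition of `θ` with the common part `γ` of `k` and `l`. -/
lemma le_compProd_add_compProd (η' : Measure (X × E)) (η α β D θ : Measure X)
    [IsFiniteMeasure η] [IsFiniteMeasure α] [IsFiniteMeasure β] [IsFiniteMeasure D]
    [IsFiniteMeasure θ] (k l γ : Kernel X E) [IsFiniteKernel k] [IsFiniteKernel l]
    [IsFiniteKernel γ] (hγl : ∀ x, γ x ≤ l x) {H : Set (X × E)}
    (hH : MeasurableSet H)
    (hkH : ∀ x A, MeasurableSet A → A ⊆ Prod.mk x ⁻¹' H → k x A ≤ γ x A)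
    (hlH : ∀ x A, MeasurableSet A → A ⊆ Prod.mk x ⁻¹' Hᶜ → l x A ≤ γ x A)
    (h1 : η' ≤ (η + α) ⊗ₘ k) (h2 : η' ≤ (η + β) ⊗ₘ l) {S : Set X} (hS : MeasurableSet S)
    (hS0 : (η + β) Sᶜ = 0) (hη : η ≤ θ + D) :
    η' ≤ θ ⊗ₘ γ + (D + (α + β).restrict S) ⊗ₘ l := by
  have hbound : η' ≤ η ⊗ₘ γ + (α.restrict S + β.restrict S) ⊗ₘ l := by
    refine Measure.le_iff.2 fun A hA => ?_
    have hSE : MeasurableSet (Prod.fst ⁻¹' S : Set (X × E)) := measurable_fst hS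
    have hS' : η' (Prod.fst ⁻¹' S : Set (X × E))ᶜ = 0 := by
      refine le_antisymm ((h2 _).trans (le_of_eq ?_)) zero_le
      rw [Measure.compProd_apply hSE.compl]
      refine (lintegral_eq_zero_iff (Kernel.measurable_kernel_prodMk_left hSE.compl)).2 ?_
      have : ∀ᵐ x ∂(η + β), x ∈ S := hS0
      filter_upwards [this] with x hx
      have : Prod.mk x ⁻¹' (Prod.fst ⁻¹' S : Set (X × E))ᶜ = ∅ :=
        Set.eq_empty_of_forall_notMem fun z hz => hz hx
      simp only [this, measure_empty, Pi.zero_apply]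
    have hA1 : MeasurableSet (A ∩ Prod.fst ⁻¹' S ∩ H) := (hA.inter hSE).inter hH
    have hA2 : MeasurableSet ((A ∩ Prod.fst ⁻¹' S) \ H) := (hA.inter hSE).diff hH
    have e0 : η' A = η' (A ∩ Prod.fst ⁻¹' S ∩ H) + η' ((A ∩ Prod.fst ⁻¹' S) \ H) := by
      rw [measure_inter_add_sdiff _ hH, ← measure_inter_add_sdiff A hSE]
      simp [measure_mono_null (Set.sdiff_subset_compl A _) hS']
    have hrestr : ∀ (ξ : Measure X) [IsFiniteMeasure ξ] (B : Set (X × E)), MeasurableSet B →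
        B ⊆ Prod.fst ⁻¹' S → (ξ.restrict S ⊗ₘ l) B = (ξ ⊗ₘ l) B := by
      intro ξ _ B hB hBS
      rw [Measure.compProd_apply hB, Measure.compProd_apply hB]
      refine setLIntegral_eq_of_support_subset fun x hx => ?_
      by_contra hxS
      apply hx
      have : Prod.mk x ⁻¹' B = ∅ := by
        ext z
        simp only [Set.mem_preimage, Set.mem_empty_iff_false, iff_false]
        exact fun hz => hxS (hBS hz)
      simp [this]
    have i1 : η' (A ∩ Prod.fst ⁻¹' S ∩ H) ≤ (η ⊗ₘ γ) (A ∩ Prod.fst ⁻¹' S ∩ H) +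
        ((α.restrict S + β.restrict S) ⊗ₘ l) (A ∩ Prod.fst ⁻¹' S ∩ H) := by
      refine (h1 _).trans ?_
      rw [Measure.compProd_add_left, Measure.compProd_add_left, Measure.add_apply,
        Measure.add_apply, hrestr α _ hA1 (fun q hq => hq.1.2)]
      refine add_le_add ?_ (le_add_right ?_)
      · rw [Measure.compProd_apply hA1, Measure.compProd_apply hA1]
        exact lintegral_mono fun x => hkH x _ (measurable_prodMk_left hA1) fun z hz => hz.2
      · rw [Measure.compProd_apply hA1, Measure.compProd_apply hA1]
        exact lintegral_mono fun x =>
          (hkH x _ (measurable_prodMk_left hA1) fun z hz => hz.2).trans (hγl x _)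
    have i2 : η' ((A ∩ Prod.fst ⁻¹' S) \ H) ≤ (η ⊗ₘ γ) ((A ∩ Prod.fst ⁻¹' S) \ H) +
        ((α.restrict S + β.restrict S) ⊗ₘ l) ((A ∩ Prod.fst ⁻¹' S) \ H) := by
      refine (h2 _).trans ?_
      rw [Measure.compProd_add_left, Measure.compProd_add_left, Measure.add_apply,
        Measure.add_apply, hrestr β _ hA2 (fun q hq => hq.1.2)]
      refine add_le_add ?_ (le_add_left le_rfl)
      rw [Measure.compProd_apply hA2, Measure.compProd_apply hA2]
      exact lintegral_mono fun x => hlH x _ (measurable_prodMk_left hA2) fun z hz => hz.2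
    rw [e0]
    refine (add_le_add i1 i2).trans ?_
    rw [add_add_add_comm, measure_inter_add_sdiff _ hH, measure_inter_add_sdiff _ hH]
    exact add_le_add (measure_mono Set.inter_subset_left) (measure_mono Set.inter_subset_left)
  have hmono : η ⊗ₘ γ ≤ θ ⊗ₘ γ + D ⊗ₘ l := by
    refine Measure.le_iff.2 fun A hA => ?_
    rw [Measure.add_apply, Measure.compProd_apply hA, Measure.compProd_apply hA,
      Measure.compProd_apply hA]
    refine (lintegral_mono' hη le_rfl).trans ?_
    rw [lintegral_add_measure]
    exact add_le_add le_rfl (lintegral_mono fun x => hγl x _)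
  refine hbound.trans ?_
  rw [Measure.compProd_add_left D, ← add_assoc, Measure.restrict_add]
  exact add_le_add hmono le_rfl

end Diagonal

section Causality

/-- Conditional independence follows once the conditional probabilities given `m₂` of the events
of `m₁` have versions that are measurable with respect to the smaller σ-algebra `m'`. -/
lemma condIndep_of_forall_measure_inter_eq {Ω : Type*} {m' m₁ m₂ mΩ : MeasurableSpace Ω}
    [StandardBorelSpace Ω] (hm' : m' ≤ mΩ) (hm₁ : m₁ ≤ mΩ) (hm₂ : m₂ ≤ mΩ) (hm'₂ : m' ≤ m₂)
    (π : Measure Ω) [IsFiniteMeasure π]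
    (h : ∀ s, MeasurableSet[m₁] s → ∃ f : Ω → ℝ≥0∞, Measurable[m'] f ∧
      ∀ A, MeasurableSet[m₂] A → π (s ∩ A) = ∫⁻ ω in A, f ω ∂π) :
    CondIndep m' m₁ m₂ hm' π := by
  rw [condIndep_iff m' m₁ m₂ hm' hm₁ hm₂]
  intro s t hs ht
  obtain ⟨f, hf, hfA⟩ := h s hs
  have hsΩ := hm₁ s hs
  have htΩ := hm₂ t ht
  have hfΩ : Measurable f := hf.mono hm' le_rfl
  have hfin : ∫⁻ ω, f ω ∂π ≠ ∞ := by
    have := hfA Set.univ MeasurableSet.univ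
    rw [setLIntegral_univ] at this
    rw [← this]
    exact measure_ne_top _ _
  have hlt : ∀ᵐ ω ∂π, f ω < ∞ := ae_lt_top hfΩ hfin
  set F : Ω → ℝ := fun ω => (f ω).toReal with hF
  have hFm : StronglyMeasurable[m'] F := hf.ennreal_toReal.stronglyMeasurable
  have hFi : Integrable F π := integrable_toReal_of_lintegral_ne_top hfΩ.aemeasurable hfin
  have hFA : ∀ A, MeasurableSet[m₂] A → ∫ ω in A, F ω ∂π = π.real (s ∩ A) := by
    intro A hA
    rw [integral_toReal hfΩ.aemeasurable (ae_restrict_of_ae hlt), ← hfA A hA]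
    rfl
  have hind : ∀ u, MeasurableSet u → Integrable (u.indicator fun _ : Ω => (1 : ℝ)) π :=
    fun u hu => (integrable_const 1).indicator hu
  have hindA : ∀ u C, MeasurableSet u → ∫ ω in C, u.indicator (fun _ : Ω => (1 : ℝ)) ω ∂π =
      π.real (u ∩ C) := by
    intro u C hu
    rw [integral_indicator_const _ hu, smul_eq_mul, mul_one, measureReal_restrict_apply hu]
  have hFs : F =ᵐ[π] π⟦s | m'⟧ := by
    refine ae_eq_condExp_of_forall_setIntegral_eq hm' (hind s hsΩ)
      (fun _ _ _ => hFi.integrableOn) (fun C hC _ => ?_) hFm.aestronglyMeasurable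
    rw [hFA C (hm'₂ C hC), hindA s C hsΩ]
  have hprod : F * (t.indicator fun _ : Ω => (1 : ℝ)) = t.indicator F := by
    ext ω
    by_cases hω : ω ∈ t <;> simp [hω]
  have hprodi : Integrable (F * (t.indicator fun _ : Ω => (1 : ℝ))) π := by
    rw [hprod]; exact hFi.indicator htΩ
  have hpull := condExp_mul_of_stronglyMeasurable_left hFm hprodi (hind t htΩ)
  have hst : π[F * (t.indicator fun _ : Ω => (1 : ℝ)) | m'] =ᵐ[π] π⟦s ∩ t | m'⟧ := by
    refine ae_eq_condExp_of_forall_setIntegral_eq hm' (hind _ (hsΩ.inter htΩ))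
      (fun _ _ _ => integrable_condExp.integrableOn) (fun C hC _ => ?_)
      stronglyMeasurable_condExp.aestronglyMeasurable
    rw [setIntegral_condExp hm' hprodi hC, hindA _ C (hsΩ.inter htΩ), hprod,
      setIntegral_indicator htΩ, hFA _ ((hm'₂ C hC).inter ht), Set.inter_assoc,
      Set.inter_comm C t]
  filter_upwards [hFs, hpull, hst] with ω h1 h2 h3
  rw [← h3, h2, Pi.mul_apply, Pi.mul_apply, h1]

variable {d n : ℕ}

/-- A law of pairs of paths is causal if, for every `t`, the conditional law of the first `t`
coordinates of the second path given the whole first path depends only on the first `t`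
coordinates of the latter. -/
def IsCausal (π : Measure (Traj d n × Traj d n)) : Prop :=
  ∀ t (ht : t ≤ n) (B : Set (Traj d t)), MeasurableSet B →
    ∃ h : Traj d t → ℝ≥0∞, Measurable h ∧
      (π.restrict {q | restr d ht q.2 ∈ B}).map Prod.fst =
        (π.map Prod.fst).withDensity (fun x => h (restr d ht x))

/-- A law that is causal in both directions is bicausal. -/
lemma isBicausal_of_isCausal {π : Measure (Traj d n × Traj d n)} [IsFiniteMeasure π]
    (h1 : IsCausal π) (h2 : IsCausal (π.map Prod.swap)) : IsBicausal d n π := by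
  intro t _ ht
  have ht' : t ≤ n := Nat.le_of_succ_le ht
  have hm := measurable_restr d ht'
  constructor
  · refine condIndep_of_forall_measure_inter_eq _ (sigmaY_le d n _) (sigmaX_le d n _) ?_ π ?_
    · rintro _ ⟨B, hB, rfl⟩
      exact ⟨restr d ht' ⁻¹' B, hm hB, rfl⟩
    · rintro _ ⟨B, hB, rfl⟩
      obtain ⟨h, hh, he⟩ := h1 t ht' B hB
      have hhm : Measurable fun x => h (restr d ht' x) := hh.comp hm
      refine ⟨fun q => h (restr d ht' q.1), hh.comp (comap_measurable _), ?_⟩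
      rintro _ ⟨A, hA, rfl⟩
      have := DFunLike.congr_fun he A
      rw [Measure.map_apply measurable_fst hA, Measure.restrict_apply (measurable_fst hA),
        withDensity_apply _ hA, setLIntegral_map hA hhm measurable_fst] at this
      rw [Set.inter_comm]
      exact this
  · refine condIndep_of_forall_measure_inter_eq _ (sigmaX_le d n _) (sigmaY_le d n _) ?_ π ?_
    · rintro _ ⟨B, hB, rfl⟩
      exact ⟨restr d ht' ⁻¹' B, hm hB, rfl⟩
    · rintro _ ⟨B, hB, rfl⟩
      obtain ⟨h, hh, he⟩ := h2 t ht' B hB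
      have hBm : MeasurableSet {q : Traj d n × Traj d n | restr d ht' q.2 ∈ B} :=
        (hm.comp measurable_snd) hB
      have hhm : Measurable fun x => h (restr d ht' x) := hh.comp hm
      refine ⟨fun q => h (restr d ht' q.2), hh.comp (comap_measurable _), ?_⟩
      rintro _ ⟨A, hA, rfl⟩
      have := DFunLike.congr_fun he A
      rw [Measure.map_apply measurable_fst hA, Measure.restrict_apply (measurable_fst hA),
        withDensity_apply _ hA, Measure.map_map measurable_fst measurable_swap,
        setLIntegral_map hA hhm (measurable_fst.comp measurable_swap),
        Measure.map_apply measurable_swap ((measurable_fst hA).inter hBm)] at this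
      rw [Set.inter_comm]
      exact this

/-- Appending one time step to a path. -/
def snocPath (q : Traj d n × (Fin d → ℝ)) : Traj d (n + 1) :=
  Fin.snoc (α := fun _ => Fin d → ℝ) q.1 q.2

lemma measurable_snocPath : Measurable (snocPath : Traj d n × (Fin d → ℝ) → Traj d (n + 1)) := by
  refine measurable_pi_lambda _ fun i => ?_
  refine Fin.lastCases ?_ (fun i => ?_) i
  · simpa only [snocPath, Fin.snoc_last] using measurable_snd
  · simpa only [snocPath, Fin.snoc_castSucc] using measurable_fst.eval

/-- The first `n` coordinates and the last coordinate of a path of length `n + 1`. -/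
def splitLast (x : Traj d (n + 1)) : Traj d n × (Fin d → ℝ) :=
  (restr d n.le_succ x, x (Fin.last n))

lemma measurable_splitLast :
    Measurable (splitLast : Traj d (n + 1) → Traj d n × (Fin d → ℝ)) :=
  (measurable_restr d _).prodMk (measurable_pi_apply _)

lemma restr_restr {s t u : ℕ} (hst : s ≤ t) (htu : t ≤ u) (x : Traj d u) :
    restr d hst (restr d htu x) = restr d (hst.trans htu) x := rfl

lemma restr_snocPath (q : Traj d n × (Fin d → ℝ)) : restr d n.le_succ (snocPath q) = q.1 := by
  ext1 i
  exact Fin.snoc_castSucc (α := fun _ => Fin d → ℝ) _ _ i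

lemma snocPath_last (q : Traj d n × (Fin d → ℝ)) : snocPath q (Fin.last n) = q.2 :=
  Fin.snoc_last (α := fun _ => Fin d → ℝ) _ _

lemma splitLast_snocPath (q : Traj d n × (Fin d → ℝ)) : splitLast (snocPath q) = q :=
  Prod.ext (restr_snocPath q) (snocPath_last q)

lemma snocPath_splitLast (x : Traj d (n + 1)) : snocPath (splitLast x) = x := by
  ext1 i
  refine Fin.lastCases ?_ (fun i => ?_) i
  · exact snocPath_last _
  · exact congrFun (restr_snocPath (splitLast x)) i

lemma exists_map_fst_restrict_eq_withDensity {X Y : Type*} [MeasurableSpace X]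
    [MeasurableSpace Y] (π : Measure (X × Y)) [IsFiniteMeasure π] (B : Set (X × Y)) :
    ∃ h : X → ℝ≥0∞, Measurable h ∧
      (π.restrict B).map Prod.fst = (π.map Prod.fst).withDensity h := by
  have hac : (π.restrict B).map Prod.fst ≪ π.map Prod.fst :=
    (Measure.map_mono Measure.restrict_le_self measurable_fst).absolutelyContinuous
  exact ⟨_, Measure.measurable_rnDeriv _ _, (Measure.withDensity_rnDeriv_eq _ _ hac).symm⟩

lemma isCausal_zero (π : Measure (Traj d 0 × Traj d 0)) [IsFiniteMeasure π] : IsCausal π := by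
  intro t ht B _
  obtain rfl : t = 0 := by omega
  exact exists_map_fst_restrict_eq_withDensity π _

/-- Causality is inherited by an extension by one step in which the last coordinate of the first
path depends on the pasts of both paths only through the past of the first one. -/
lemma isCausal_of_map_eq_compProd {π : Measure (Traj d n × Traj d n)} [IsFiniteMeasure π]
    (hπ : IsCausal π) {k : Kernel (Traj d n) (Fin d → ℝ)} [IsMarkovKernel k]
    {π' : Measure (Traj d (n + 1) × Traj d (n + 1))} [IsFiniteMeasure π']
    (h : π'.map (fun q => ((restr d n.le_succ q.1, restr d n.le_succ q.2), q.1 (Fin.last n))) =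
      π ⊗ₘ k.comap Prod.fst measurable_fst) :
    IsCausal π' := by
  intro t ht B hB
  rcases Nat.lt_or_ge n t with hlt | hle
  · obtain rfl : t = n + 1 := by omega
    exact exists_map_fst_restrict_eq_withDensity π' _
  · obtain ⟨g, hg, hgπ⟩ := hπ t hle B hB
    refine ⟨g, hg, Measure.ext fun A hA => ?_⟩
    have hm : Measurable fun q : Traj d (n + 1) × Traj d (n + 1) =>
        ((restr d n.le_succ q.1, restr d n.le_succ q.2), q.1 (Fin.last n)) := by
      have h1 := measurable_restr d n.le_succ
      exact ((h1.comp measurable_fst).prodMk (h1.comp measurable_snd)).prodMk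
        ((measurable_pi_apply _).comp measurable_fst)
    have he : Measurable fun p : (Traj d n × Traj d n) × (Fin d → ℝ) =>
        snocPath (p.1.1, p.2) := measurable_snocPath.comp (by fun_prop)
    have hr := measurable_restr d hle
    have hgr : Measurable fun x => g (restr d hle x) := hg.comp hr
    have hgt : Measurable fun x => g (restr d ht x) := hg.comp (measurable_restr d ht)
    have hge : Measurable fun p : (Traj d n × Traj d n) × (Fin d → ℝ) =>
        g (restr d ht (snocPath (p.1.1, p.2))) := hgt.comp he
    have hA' := measurable_snocPath hA
    let N : Traj d n → ℝ≥0∞ := fun x => k x (Prod.mk x ⁻¹' (snocPath ⁻¹' A))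
    have hN : Measurable N := Kernel.measurable_kernel_prodMk_left hA'
    have hBm : MeasurableSet {q : Traj d n × Traj d n | restr d hle q.2 ∈ B} :=
      (hr.comp measurable_snd) hB
    have hfst : π'.map Prod.fst =
        (π ⊗ₘ k.comap Prod.fst measurable_fst).map (fun p => snocPath (p.1.1, p.2)) := by
      rw [← h, Measure.map_map he hm]
      congr 1
      ext1 q
      exact (snocPath_splitLast q.1).symm
    have hL : (π'.restrict {q | restr d ht q.2 ∈ B}).map Prod.fst A =
        ∫⁻ x, g (restr d hle x) * N x ∂(π.map Prod.fst) := by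
      have hset : Prod.fst ⁻¹' A ∩ {q : Traj d (n + 1) × Traj d (n + 1) | restr d ht q.2 ∈ B} =
          (fun q => ((restr d n.le_succ q.1, restr d n.le_succ q.2), q.1 (Fin.last n))) ⁻¹'
            ((fun p : (Traj d n × Traj d n) × (Fin d → ℝ) => snocPath (p.1.1, p.2)) ⁻¹' A ∩
              Prod.fst ⁻¹' {q | restr d hle q.2 ∈ B}) := by
        ext q
        have := snocPath_splitLast q.1
        simp only [splitLast] at this
        simp [this, restr_restr]
      have hms := (he hA).inter (measurable_fst (β := Fin d → ℝ) hBm)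
      rw [Measure.map_apply measurable_fst hA, Measure.restrict_apply (measurable_fst hA), hset,
        ← Measure.map_apply hm hms, h, Measure.compProd_apply hms]
      have : ∫⁻ x, g (restr d hle x) * N x ∂(π.map Prod.fst) =
          ∫⁻ q in {q | restr d hle q.2 ∈ B}, N q.1 ∂π := by
        rw [← lintegral_map hN measurable_fst, hgπ,
          lintegral_withDensity_eq_lintegral_mul _ hgr hN]
        rfl
      rw [this, ← lintegral_indicator hBm]
      congr 1
      ext1 q
      by_cases hq : q ∈ {q : Traj d n × Traj d n | restr d hle q.2 ∈ B}
      · rw [Set.indicator_of_mem hq, Set.preimage_inter]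
        have : Prod.mk q ⁻¹' (Prod.fst ⁻¹' {q : Traj d n × Traj d n | restr d hle q.2 ∈ B} :
            Set (_ × (Fin d → ℝ))) = Set.univ :=
          Set.eq_univ_of_forall fun _ => hq
        rw [this, Set.inter_univ]
        rfl
      · rw [Set.indicator_of_notMem hq, Set.preimage_inter]
        have : Prod.mk q ⁻¹' (Prod.fst ⁻¹' {q : Traj d n × Traj d n | restr d hle q.2 ∈ B} :
            Set (_ × (Fin d → ℝ))) = ∅ :=
          Set.eq_empty_of_forall_notMem fun _ => hq
        rw [this, Set.inter_empty, measure_empty]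
    rw [hL, withDensity_apply _ hA, hfst,
      setLIntegral_map hA hgt he, ← lintegral_indicator (he hA),
      Measure.lintegral_compProd (hge.indicator (he hA)),
      lintegral_map (f := fun x => g (restr d hle x) * N x) (hgr.mul hN) measurable_fst]
    congr 1
    ext1 q
    have : ∀ z, ((fun p : (Traj d n × Traj d n) × (Fin d → ℝ) => snocPath (p.1.1, p.2)) ⁻¹'
        A).indicator (fun p => g (restr d ht (snocPath (p.1.1, p.2)))) (q, z) =
        (Prod.mk q.1 ⁻¹' (snocPath ⁻¹' A)).indicator (fun _ => g (restr d hle q.1)) z := by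
      intro z
      have hz : restr d ht (snocPath (q.1, z)) = restr d hle q.1 := by
        rw [← restr_restr hle n.le_succ, restr_snocPath]
      simp only [Set.indicator, hz]
      rfl
    simp_rw [this]
    rw [lintegral_indicator (measurable_prodMk_left hA'), setLIntegral_const]
    rfl

end Causality

section Step

lemma map_compProd_comap {X Y E : Type*} [MeasurableSpace X] [MeasurableSpace Y]
    [MeasurableSpace E] (π : Measure X) [SFinite π] {f : X → Y} (hf : Measurable f)
    (k : Kernel Y E) [IsSFiniteKernel k] :
    (π ⊗ₘ k.comap f hf).map (Prod.map f id) = π.map f ⊗ₘ k := by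
  refine Measure.ext fun A hA => ?_
  rw [Measure.map_apply (hf.prodMap measurable_id) hA,
    Measure.compProd_apply (hf.prodMap measurable_id hA), Measure.compProd_apply hA,
    lintegral_map (Kernel.measurable_kernel_prodMk_left hA) hf]
  rfl

variable {d n : ℕ}

/-- One step of the greedy construction of a bicausal coupling: a causal coupling of two laws on
paths of length `n` is extended to paths of length `n + 1` by gluing as much as possible of the
conditional laws of the last coordinates, once the two paths have met so far. -/
lemma exists_causal_extension (π : Measure (Traj d n × Traj d n)) [IsProbabilityMeasure π]
    (hπ : IsCausal π) (hπs : IsCausal (π.map Prod.swap))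
    (k l : Kernel (Traj d n) (Fin d → ℝ)) [IsMarkovKernel k] [IsMarkovKernel l]
    (η' : Measure (Traj d (n + 1))) (η α β D : Measure (Traj d n))
    [IsFiniteMeasure η] [IsFiniteMeasure α] [IsFiniteMeasure β] [IsFiniteMeasure D]
    (hα : π.map Prod.fst = η + α) (hβ : π.map Prod.snd = η + β)
    (h1 : η' ≤ ((η + α) ⊗ₘ k).map snocPath) (h2 : η' ≤ ((η + β) ⊗ₘ l).map snocPath)
    {S : Set (Traj d n)} (hS : MeasurableSet S) (hS0 : (η + β) Sᶜ = 0)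
    (hη : η ≤ diagPart π + D) :
    ∃ π' : Measure (Traj d (n + 1) × Traj d (n + 1)), IsProbabilityMeasure π' ∧
      π'.map Prod.fst = ((η + α) ⊗ₘ k).map snocPath ∧
      π'.map Prod.snd = ((η + β) ⊗ₘ l).map snocPath ∧
      IsCausal π' ∧ IsCausal (π'.map Prod.swap) ∧
      η' ≤ diagPart π' + ((D + (α + β).restrict S) ⊗ₘ l).map snocPath := by
  obtain ⟨H, γ, k', l', hH, hk, hl, hkH, hlH⟩ := exists_common_part_kernel k l
  have hγl : ∀ x, γ x ≤ l x := fun x => by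
    rw [hl, add_apply]
    exact Measure.le_add_right le_rfl
  have : IsFiniteKernel γ := ⟨1, ENNReal.one_lt_top, fun x => (hγl x _).trans prob_le_one⟩
  obtain ⟨K, hK, hK1, hK2, hKγ⟩ := exists_coupling_kernel k l γ k' l' hk hl
  set e : (Traj d n × Traj d n) × ((Fin d → ℝ) × (Fin d → ℝ)) →
    Traj d (n + 1) × Traj d (n + 1) :=
    fun q => (snocPath (q.1.1, q.2.1), snocPath (q.1.2, q.2.2)) with he
  have hs := measurable_snocPath (d := d) (n := n)
  have hem : Measurable e := (hs.comp (by fun_prop)).prodMk (hs.comp (by fun_prop))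
  have hr := measurable_restr d n.le_succ
  have hlast : Measurable fun x : Traj d (n + 1) => x (Fin.last n) := measurable_pi_apply _
  have hKfst : (π ⊗ₘ K).map (Prod.map id Prod.fst) = π ⊗ₘ k.comap Prod.fst measurable_fst := by
    rw [← Measure.compProd_map measurable_fst]
    congr 1
    ext1 q
    rw [Kernel.map_apply _ measurable_fst, hK1, Kernel.comap_apply]
  have hKsnd : (π ⊗ₘ K).map (Prod.map id Prod.snd) = π ⊗ₘ l.comap Prod.snd measurable_snd := by
    rw [← Measure.compProd_map measurable_snd]
    congr 1
    ext1 q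
    rw [Kernel.map_apply _ measurable_snd, hK2, Kernel.comap_apply]
  have hprob : IsProbabilityMeasure ((π ⊗ₘ K).map e) :=
    Measure.isProbabilityMeasure_map hem.aemeasurable
  have hprobs : IsProbabilityMeasure (((π ⊗ₘ K).map e).map Prod.swap) :=
    Measure.isProbabilityMeasure_map measurable_swap.aemeasurable
  refine ⟨(π ⊗ₘ K).map e, hprob, ?_, ?_, ?_, ?_, ?_⟩
  · rw [← hα, ← map_compProd_comap _ measurable_fst, ← hKfst,
      Measure.map_map measurable_fst hem, Measure.map_map hs (by fun_prop),
      Measure.map_map (hs.comp (by fun_prop)) (by fun_prop)]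
    rfl
  · rw [← hβ, ← map_compProd_comap _ measurable_snd, ← hKsnd,
      Measure.map_map measurable_snd hem, Measure.map_map hs (by fun_prop),
      Measure.map_map (hs.comp (by fun_prop)) (by fun_prop)]
    rfl
  · refine isCausal_of_map_eq_compProd (k := k) hπ ?_
    rw [← hKfst, Measure.map_map (by fun_prop) hem]
    congr 1
    ext1 q
    simp only [he, Function.comp_apply, restr_snocPath, snocPath_last]
    rfl
  · have : IsProbabilityMeasure (π.map Prod.swap) :=
      Measure.isProbabilityMeasure_map measurable_swap.aemeasurable
    refine isCausal_of_map_eq_compProd (k := l) hπs ?_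
    rw [← map_compProd_comap _ measurable_swap]
    change _ = (π ⊗ₘ l.comap Prod.snd measurable_snd).map _
    rw [← hKsnd, Measure.map_map (by fun_prop) measurable_swap,
      Measure.map_map (by fun_prop) hem, Measure.map_map (by fun_prop) (by fun_prop)]
    congr 1
    ext1 q
    simp only [he, Function.comp_apply, Prod.fst_swap, Prod.snd_swap, restr_snocPath,
      snocPath_last]
    rfl
  · have hsplit : ∀ ξ : Measure (Traj d n × (Fin d → ℝ)),
        (ξ.map snocPath).map splitLast = ξ := fun ξ => by
      rw [Measure.map_map measurable_splitLast hs]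
      convert Measure.map_id
      ext1 q
      exact splitLast_snocPath q
    have key := le_compProd_add_compProd (η'.map splitLast) η α β D (diagPart π) k l γ hγl hH
      hkH hlH (by simpa only [hsplit] using Measure.map_mono h1 measurable_splitLast)
      (by simpa only [hsplit] using Measure.map_mono h2 measurable_splitLast) hS hS0 hη
    have := Measure.map_mono key hs
    rw [Measure.map_add _ _ hs, Measure.map_map hs measurable_splitLast] at this
    have hid : (snocPath ∘ splitLast : Traj d (n + 1) → Traj d (n + 1)) = id :=
      funext snocPath_splitLast
    rw [hid, Measure.map_id] at this
    exact this.trans (add_le_add_left (compProd_diagPart_map_le π K γ hKγ hs) _)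

end Step

section Weight

variable {d n : ℕ} {p : ℝ}

@[fun_prop]
lemma measurable_wp : Measurable (wp p : Traj d n → ℝ) := by
  unfold wp
  fun_prop

lemma wp_restr_le {m : ℕ} (h : n ≤ m) (x : Traj d m) : wp p (restr d h x) ≤ wp p x := by
  unfold wp restr
  refine add_le_add_right ?_ _
  refine (Finset.sum_map Finset.univ (Fin.castLEEmb h) fun i => ∑ j, |x i j| ^ p).symm.trans_le ?_
  exact Finset.sum_le_univ_sum_of_nonneg fun i => by positivity

lemma wp_snocPath (x : Traj d n) (z : Fin d → ℝ) :
    wp p (snocPath (x, z)) = wp p x + ∑ j, |z j| ^ p := by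
  unfold wp snocPath
  rw [Fin.sum_univ_castSucc, ← add_assoc]
  simp only [Fin.snoc_castSucc, Fin.snoc_last]

lemma wp_nonneg (x : Traj d n) : 0 ≤ wp p x := by
  unfold wp
  positivity

lemma lintegral_wp_compProd_le (D : Measure (Traj d n)) [SFinite D]
    (l : Kernel (Traj d n) (Fin d → ℝ)) [IsMarkovKernel l] {c : ℝ} (hc : 0 ≤ c)
    (h : ∀ᵐ x ∂D, ∫⁻ z, ENNReal.ofReal (∑ j, |z j| ^ p) ∂(l x) ≤ ENNReal.ofReal (c * wp p x)) :
    ∫⁻ x, ENNReal.ofReal (wp p x) ∂((D ⊗ₘ l).map snocPath) ≤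
      ENNReal.ofReal (1 + c) * ∫⁻ x, ENNReal.ofReal (wp p x) ∂D := by
  rw [lintegral_map (by fun_prop) measurable_snocPath,
    Measure.lintegral_compProd
      (f := fun q : Traj d n × (Fin d → ℝ) => ENNReal.ofReal (wp p (snocPath q)))
      (measurable_wp.ennreal_ofReal.comp measurable_snocPath),
    ← lintegral_const_mul _ (by fun_prop)]
  refine lintegral_mono_ae (h.mono fun x hx => ?_)
  have hz : ∀ z : Fin d → ℝ, 0 ≤ ∑ j, |z j| ^ p := fun z => by positivity
  simp_rw [wp_snocPath, ENNReal.ofReal_add (wp_nonneg x) (hz _)]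
  rw [lintegral_add_left measurable_const, lintegral_const, measure_univ, mul_one,
    ← ENNReal.ofReal_mul (by positivity), add_mul, one_mul,
    ENNReal.ofReal_add (wp_nonneg x) (mul_nonneg hc (wp_nonneg x))]
  gcongr

end Weight

section Induction

variable {d n T : ℕ} {p : ℝ}

lemma exists_eq_map_compProd (μ : Measure (Traj d (n + 1))) [IsFiniteMeasure μ] :
    ∃ k : Kernel (Traj d n) (Fin d → ℝ), IsMarkovKernel k ∧
      μ = (μ.map (restr d n.le_succ) ⊗ₘ k).map snocPath := by
  have hfst : (μ.map splitLast).fst = μ.map (restr d n.le_succ) := by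
    rw [Measure.fst, Measure.map_map measurable_fst measurable_splitLast]
    rfl
  refine ⟨(μ.map splitLast).condKernel, inferInstance, ?_⟩
  rw [← hfst, Measure.disintegrate, Measure.map_map measurable_snocPath measurable_splitLast]
  have hid : (snocPath ∘ splitLast : Traj d (n + 1) → Traj d (n + 1)) = id :=
    funext snocPath_splitLast
  rw [hid, Measure.map_id]

lemma map_snocPath_compProd (m : Measure (Traj d n)) [SFinite m]
    (l : Kernel (Traj d n) (Fin d → ℝ)) [IsSFiniteKernel l] :
    (m ⊗ₘ l).map snocPath = m.bind fun x => (l x).map fun z => snocPath (x, z) := by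
  have hs := measurable_snocPath (d := d) (n := n)
  have hsx : ∀ x : Traj d n, Measurable fun z => snocPath (x, z) :=
    fun x => hs.comp measurable_prodMk_left
  have hmeas : Measurable fun x => (l x).map fun z => snocPath (x, z) := by
    refine Measure.measurable_of_measurable_coe _ fun A hA => ?_
    simp_rw [Measure.map_apply (hsx _) hA]
    exact Kernel.measurable_kernel_prodMk_left (hs hA)
  refine Measure.ext fun A hA => ?_
  rw [Measure.map_apply hs hA, Measure.compProd_apply (hs hA),
    Measure.bind_apply hA hmeas.aemeasurable]
  refine lintegral_congr fun x => ?_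
  rw [Measure.map_apply (hsx x) hA]
  rfl

lemma diagPart_of_subsingleton {X : Type*} [MeasurableSpace X] [Subsingleton X]
    (π : Measure (X × X)) : diagPart π = π.map Prod.fst := by
  have : {q : X × X | q.1 = q.2} = Set.univ :=
    Set.eq_univ_of_forall fun q => Subsingleton.elim _ _
  rw [diagPart, this, Measure.restrict_univ]

lemma sum_prod_Icc_succ (c : ℕ → ℝ) (hn : 1 ≤ n) :
    ∑ t ∈ Finset.Icc 1 (n + 1 - 1), ∏ s ∈ Finset.Icc (t + 1) (n + 1), (1 + c s) =
      (1 + c (n + 1)) *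
        (∑ t ∈ Finset.Icc 1 (n - 1), ∏ s ∈ Finset.Icc (t + 1) n, (1 + c s) + 1) := by
  obtain ⟨m, rfl⟩ : ∃ m, n = m + 1 := ⟨n - 1, by omega⟩
  rw [Nat.add_sub_cancel, Nat.add_sub_cancel, Finset.sum_Icc_succ_top (by omega),
    Finset.Icc_self, Finset.prod_singleton, mul_add, mul_one, Finset.mul_sum]
  congr 1
  refine Finset.sum_congr rfl fun t ht => ?_
  rw [Finset.mem_Icc] at ht
  rw [Finset.prod_Icc_succ_top (by omega), mul_comm]

lemma sum_prod_Icc_nonneg {c : ℕ → ℝ} (hc : ∀ t, 2 ≤ t → t ≤ n → 0 ≤ c t) :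
    0 ≤ ∑ t ∈ Finset.Icc 1 (n - 1), ∏ s ∈ Finset.Icc (t + 1) n, (1 + c s) := by
  refine Finset.sum_nonneg fun t ht => Finset.prod_nonneg fun s hs => ?_
  rw [Finset.mem_Icc] at ht hs
  have := hc s (by omega) hs.2
  positivity

/-- For every `n` there is a bicausal coupling of the first `n` coordinates of `η + α` and `η + β`
whose diagonal part contains the common part `η` up to an error `D` of controlled weight. -/
lemma exists_causal_coupling (η α β : Measure (Traj d T)) [IsFiniteMeasure η]
    [IsFiniteMeasure α] [IsFiniteMeasure β] [IsProbabilityMeasure (η + α)]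
    [IsProbabilityMeasure (η + β)] {c : ℕ → ℝ} (hc : ∀ t, 2 ≤ t → t ≤ T → 0 ≤ c t)
    (l : ∀ t, Kernel (Traj d t) (Fin d → ℝ)) [∀ t, IsMarkovKernel (l t)]
    (hl : ∀ t, ∀ h : t + 1 ≤ T, (η + β).map (restr d h) =
      ((η + β).map (restr d (Nat.le_of_succ_le h)) ⊗ₘ l t).map snocPath)
    (hm : ∀ t, 1 ≤ t → ∀ h : t + 1 ≤ T,
      ∀ᵐ y ∂((η + β).map (restr d (Nat.le_of_succ_le h))),
        ∫⁻ z, ENNReal.ofReal (∑ j, |z j| ^ p) ∂(l t y) ≤ ENNReal.ofReal (c (t + 1) * wp p y))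
    (hn : 1 ≤ n) (h : n ≤ T) :
    ∃ (π : Measure (Traj d n × Traj d n)) (D : Measure (Traj d n)),
      IsProbabilityMeasure π ∧ π.map Prod.fst = (η + α).map (restr d h) ∧
      π.map Prod.snd = (η + β).map (restr d h) ∧ IsCausal π ∧ IsCausal (π.map Prod.swap) ∧
      IsFiniteMeasure D ∧ η.map (restr d h) ≤ diagPart π + D ∧
      ∫⁻ x, ENNReal.ofReal (wp p x) ∂D ≤
        ENNReal.ofReal (∑ t ∈ Finset.Icc 1 (n - 1), ∏ s ∈ Finset.Icc (t + 1) n, (1 + c s)) *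
          ∫⁻ x, ENNReal.ofReal (wp p x) ∂(α + β) := by
  have hηα : ∀ m (h : m ≤ T), η.map (restr d h) ≤ (η + α).map (restr d h) := fun m h =>
    Measure.map_mono (Measure.le_add_right le_rfl) (measurable_restr d h)
  have hηβ : ∀ m (h : m ≤ T), η.map (restr d h) ≤ (η + β).map (restr d h) := fun m h =>
    Measure.map_mono (Measure.le_add_right le_rfl) (measurable_restr d h)
  have hk : ∀ m (h : m + 1 ≤ T), ∃ k : Kernel (Traj d m) (Fin d → ℝ), IsMarkovKernel k ∧
      (η + α).map (restr d h) =
        ((η + α).map (restr d (Nat.le_of_succ_le h)) ⊗ₘ k).map snocPath := fun m h => by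
    obtain ⟨k, hk, hk'⟩ := exists_eq_map_compProd ((η + α).map (restr d h))
    rw [Measure.map_map (measurable_restr d _) (measurable_restr d h)] at hk'
    exact ⟨k, hk, hk'⟩
  induction n, hn using Nat.le_induction with
  | base =>
    obtain ⟨k, _, hk⟩ := hk 0 h
    have hα0 := Measure.isProbabilityMeasure_map (μ := η + α)
      (measurable_restr d T.zero_le).aemeasurable
    have hβ0 := Measure.isProbabilityMeasure_map (μ := η + β)
      (measurable_restr d T.zero_le).aemeasurable
    have heq : (η + β).map (restr d T.zero_le) = (η + α).map (restr d T.zero_le) := by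
      refine Measure.ext fun A _ => ?_
      rcases Set.eq_empty_or_nonempty A with rfl | hA
      · simp
      · rw [hA.eq_univ, measure_univ, measure_univ]
    have hl' := hl 0 h
    rw [heq] at hl'
    set m := (η + α).map (restr d T.zero_le)
    let π := m.prod m
    have : IsProbabilityMeasure (π.map Prod.swap) :=
      Measure.isProbabilityMeasure_map measurable_swap.aemeasurable
    have hfst : π.map Prod.fst = m := by simp [π]
    have hsnd : π.map Prod.snd = m := by simp [π]
    obtain ⟨π', h1, h2, h3, h4, h5, h6⟩ := exists_causal_extension π (isCausal_zero π)
      (isCausal_zero _) k (l 0) (η.map (restr d h)) m 0 0 0 (by rw [hfst, add_zero])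
      (by rw [hsnd, add_zero]) (by rw [add_zero, ← hk]; exact hηα 1 h)
      (by rw [add_zero, ← hl']; exact hηβ 1 h) MeasurableSet.univ (by simp)
      (by rw [diagPart_of_subsingleton, hfst, add_zero])
    refine ⟨π', 0, h1, by rw [h2, add_zero, hk], by rw [h3, add_zero, hl'], h4, h5,
      inferInstance, ?_, by simp⟩
    simpa using h6
  | succ n hn ih =>
    obtain ⟨π, D, _, hfst, hsnd, hc1, hc2, _, hηD, hD⟩ := ih (Nat.le_of_succ_le h)
    obtain ⟨k, _, hk⟩ := hk n h
    have hr := measurable_restr d (Nat.le_of_succ_le h)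
    have hl' := hl n h
    have hcn := hc (n + 1) (by omega) h
    rw [Measure.map_add _ _ hr] at hfst hsnd
    set S : Set (Traj d n) := {y | ∫⁻ z, ENNReal.ofReal (∑ j, |z j| ^ p) ∂(l n y) ≤
      ENNReal.ofReal (c (n + 1) * wp p y)}
    have hS : MeasurableSet S :=
      measurableSet_le (Measurable.lintegral_kernel (by fun_prop)) (by fun_prop)
    have hS0 : (η + β).map (restr d (Nat.le_of_succ_le h)) Sᶜ = 0 := hm n hn h
    have hηS : η.map (restr d (Nat.le_of_succ_le h)) ≤ diagPart π + D.restrict S := by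
      rw [← Measure.restrict_eq_self_of_ae_mem (s := S) (μ := η.map _)
        (ae_mono (hηβ n _) hS0)]
      refine (Measure.restrict_mono le_rfl hηD).trans ?_
      rw [Measure.restrict_add]
      exact add_le_add_left Measure.restrict_le_self _
    rw [Measure.map_add η β hr] at hl' hS0
    rw [Measure.map_add η α hr] at hk
    obtain ⟨π', h1, h2, h3, h4, h5, h6⟩ := exists_causal_extension π hc1 hc2 k (l n)
      (η.map (restr d h)) _ _ _ (D.restrict S) hfst hsnd (hk ▸ hηα _ h) (hl' ▸ hηβ _ h) hS hS0
      hηS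
    refine ⟨π', _, h1, by rw [h2, hk], by rw [h3, hl'], h4, h5, inferInstance, h6, ?_⟩
    rw [← Measure.restrict_add, ← Measure.map_add _ _ hr]
    refine (lintegral_wp_compProd_le _ (l n) hcn ?_).trans ?_
    · exact ae_restrict_mem hS
    rw [sum_prod_Icc_succ c hn, ENNReal.ofReal_mul (by positivity), mul_assoc,
      ENNReal.ofReal_add (sum_prod_Icc_nonneg fun t h2 ht => hc t h2 (by omega)) zero_le_one,
      ENNReal.ofReal_one, add_mul, one_mul]
    gcongr
    refine (lintegral_mono' Measure.restrict_le_self le_rfl).trans ?_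
    rw [lintegral_add_measure, lintegral_map (by fun_prop) hr]
    exact add_le_add hD (lintegral_mono fun x => ENNReal.ofReal_le_ofReal (wp_restr_le _ x))

end Induction

/-- `ATV_p^p(μ,ν) ≤ (1 + 2 ∑_{t=1}^{T-1} ∏_{s=t+1}^{T} (1+c_s)) TV_p^p(μ,ν)`
under the conditional moment assumption on `ν`. -/
theorem atv_p_le_tv_p (d T : ℕ) (hd : 1 ≤ d) (hT : 1 ≤ T) (p : ℝ) (hp : 1 ≤ p)
    (μ ν : Measure (Traj d T)) [IsProbabilityMeasure μ] [IsProbabilityMeasure ν]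
    (hμmom : (∫⁻ x, ENNReal.ofReal (∑ i, ∑ j, |x i j| ^ p) ∂μ) < ⊤)
    (hνmom : (∫⁻ x, ENNReal.ofReal (∑ i, ∑ j, |x i j| ^ p) ∂ν) < ⊤)
    -- the constants `c_2, …, c_T ≥ 0`
    (c : ℕ → ℝ) (hc : ∀ t, 2 ≤ t → t ≤ T → 0 ≤ c t)
    -- a disintegration (family of conditional kernels) of `ν`
    (κ : ∀ t : ℕ, Traj d t → Measure (Fin d → ℝ))
    (hκm : ∀ t, Measurable (κ t))
    (hκp : ∀ t x, IsProbabilityMeasure (κ t x))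
    (hκdis : ∀ t, ∀ h : t + 1 ≤ T,
      ν.map (restr d h) =
        (ν.map (restr d (Nat.le_of_succ_le h))).bind (fun x => (κ t x).map (Fin.snoc x)))
    -- conditional moment bound: for `ν_{1:t-1}`-a.e. `x_{1:t-1}`,
    -- `∫ |x̃_t|_p^p ν_{x_{1:t-1}}(dx̃_t) ≤ c_t (1 + |x_{1:t-1}|_p^p)`
    (hcm : ∀ t, 1 ≤ t → ∀ h : t + 1 ≤ T,
      ∀ᵐ y ∂(ν.map (restr d (Nat.le_of_succ_le h))),
        (∫⁻ z, ENNReal.ofReal (∑ j, |z j| ^ p) ∂(κ t y))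
          ≤ ENNReal.ofReal (c (t + 1) * (1 + ∑ i, ∑ j, |y i j| ^ p))) :
    ATVw (wp p) μ ν ≤
      ENNReal.ofReal
          (1 + 2 * ∑ t ∈ Finset.Icc 1 (T - 1), ∏ s ∈ Finset.Icc (t + 1) T, (1 + c s))
        * TVw (wp p) μ ν := by
  let l : ∀ t, Kernel (Traj d t) (Fin d → ℝ) := fun t => ⟨κ t, hκm t⟩
  have : ∀ t, IsMarkovKernel (l t) := fun t => ⟨hκp t⟩
  have hl : ∀ t, ∀ h : t + 1 ≤ T, ν.map (restr d h) =
      (ν.map (restr d (Nat.le_of_succ_le h)) ⊗ₘ l t).map snocPath := fun t h => by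
    rw [hκdis t h, map_snocPath_compProd]
    rfl
  have hC := sum_prod_Icc_nonneg hc
  set C := ∑ t ∈ Finset.Icc 1 (T - 1), ∏ s ∈ Finset.Icc (t + 1) T, (1 + c s)
  have hμw : ∫⁻ x, ENNReal.ofReal (wp p x) ∂μ ≠ ∞ := by
    simp_rw [wp, ENNReal.ofReal_add zero_le_one
      (Finset.sum_nonneg fun i _ => Finset.sum_nonneg fun j _ =>
        Real.rpow_nonneg (abs_nonneg (_ : ℝ)) p)]
    rw [lintegral_add_left measurable_const, lintegral_const, measure_univ, mul_one]
    exact ENNReal.add_ne_top.2 ⟨ENNReal.ofReal_ne_top, hμmom.ne⟩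
  have hw : Measurable fun x : Traj d T => ENNReal.ofReal (wp p x) := by fun_prop
  rw [TVw, ENNReal.mul_iInf_of_ne (by positivity) ENNReal.ofReal_ne_top]
  refine le_iInf fun ρ => ?_
  rw [ENNReal.mul_iInf_of_ne (by positivity) ENNReal.ofReal_ne_top]
  refine le_iInf fun hρ => ?_
  obtain ⟨_, hρ1, hρ2⟩ := hρ
  rw [← diagPart_add_map_fst] at hρ1
  rw [← diagPart_add_map_snd] at hρ2
  rw [lintegral_offDiag ρ hw]
  set η := diagPart ρ
  set α := (ρ.restrict {q | q.1 ≠ q.2}).map Prod.fst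
  set β := (ρ.restrict {q | q.1 ≠ q.2}).map Prod.snd
  subst hρ1 hρ2
  obtain ⟨π, D, _, hπ1, hπ2, hc1, hc2, _, hηD, hD⟩ :=
    exists_causal_coupling (p := p) η α β hc l hl hcm hT le_rfl
  have hid : restr d (le_refl T) = id := rfl
  rw [hid, Measure.map_id] at hπ1 hπ2 hηD
  have hmem : π ∈ BCpl (η + α) (η + β) :=
    ⟨⟨inferInstance, hπ1, hπ2⟩, inferInstance, isBicausal_of_isCausal hc1 hc2⟩
  refine (iInf₂_le π hmem).trans ?_
  rw [lintegral_offDiag π hw]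
  rw [← diagPart_add_map_fst] at hπ1
  rw [← diagPart_add_map_snd] at hπ2
  set θ := diagPart π
  rw [lintegral_add_measure] at hD
  have hθ : ∫⁻ x, ENNReal.ofReal (wp p x) ∂θ ≠ ∞ :=
    ne_top_of_le_ne_top hμw
      (lintegral_mono' (hπ1 ▸ Measure.le_add_right le_rfl) le_rfl)
  have hηw := lintegral_mono' hηD (le_refl fun x : Traj d T => ENNReal.ofReal (wp p x))
  rw [lintegral_add_measure] at hηw
  have bound : ∀ ξ ξ' : Measure (Traj d T), θ + ξ' = η + ξ →
      ∫⁻ x, ENNReal.ofReal (wp p x) ∂ξ' ≤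
        ∫⁻ x, ENNReal.ofReal (wp p x) ∂ξ + ∫⁻ x, ENNReal.ofReal (wp p x) ∂D := by
    intro ξ ξ' h
    have h' := congrArg (fun m : Measure (Traj d T) => ∫⁻ x, ENNReal.ofReal (wp p x) ∂m) h
    simp only [lintegral_add_measure] at h'
    refine (ENNReal.add_le_add_iff_left hθ).1 ?_
    rw [h', add_comm (lintegral ξ _), ← add_assoc]
    gcongr
  calc _ ≤ _ := add_le_add (bound _ _ hπ1) (bound _ _ hπ2)
    _ = (∫⁻ x, ENNReal.ofReal (wp p x) ∂α + ∫⁻ x, ENNReal.ofReal (wp p x) ∂β) +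
        2 * ∫⁻ x, ENNReal.ofReal (wp p x) ∂D := by ring
    _ ≤ _ := by
      rw [ENNReal.ofReal_add zero_le_one (by positivity), ENNReal.ofReal_one, add_mul, one_mul,
        ENNReal.ofReal_mul zero_le_two, ENNReal.ofReal_ofNat, mul_assoc]
      gcongr

end
end

section
/- For every integer T ≥ 1 (with d = 1) and every ε > 0, there exist Borel probability measures μ, ν on ℝ^T such that TV(μ, ν) > 0 and ATV(μ, ν) ≥ (2T − 1 − ε) · TV(μ, ν). In particular, the constant 2T − 1 in the inequality ATV ≤ (2T − 1) · TV cannot be replaced by any smaller constant valid for all pairs of probability measures on ℝ^T. -/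
open MeasureTheory ProbabilityTheory
open scoped ENNReal

noncomputable section

/-- The paths whose first `n` coordinates are all equal to `s`. -/
def constCyl (T : ℕ) (s : ℝ) (n : ℕ) : Set (Traj 1 T) :=
  {x | ∀ i : Fin T, i.val < n → x i = fun _ => s}

lemma constCyl_eq_preimage {T n : ℕ} (h : n ≤ T) (s : ℝ) :
    constCyl T s n = restr 1 h ⁻¹' {fun _ _ => s} := by
  ext x
  simp only [constCyl, Set.mem_ofPred_eq, Set.mem_preimage, Set.mem_singleton_iff]
  constructor
  · intro hx
    funext i
    exact hx (Fin.castLE h i) i.isLt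
  · intro hx i hi
    exact congrFun hx ⟨i.val, hi⟩

lemma measurableSet_constCyl {T : ℕ} (s : ℝ) (n : ℕ) : MeasurableSet (constCyl T s n) := by
  have : constCyl T s n = ⋂ i : Fin T, ⋂ _ : i.val < n, {x | x i = fun _ => s} := by
    ext x
    simp [constCyl]
  rw [this]
  exact MeasurableSet.iInter fun i => MeasurableSet.iInter fun _ =>
    measurableSet_eq_fun (measurable_pi_apply i) measurable_const

lemma constCyl_succ_subset {T : ℕ} (s : ℝ) (n : ℕ) : constCyl T s (n + 1) ⊆ constCyl T s n :=
  fun _ hx i hi => hx i (hi.trans n.lt_succ_self)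

/-- A real function measurable with respect to `σ(f)` is constant on the fibres of `f`. -/
lemma eq_of_measurable_comap {Ω β : Type*} [MeasurableSpace β] {f : Ω → β} {g : Ω → ℝ}
    (hg : Measurable[MeasurableSpace.comap f inferInstance] g) {x y : Ω} (h : f x = f y) :
    g x = g y := by
  obtain ⟨S, -, hS⟩ := hg (measurableSet_singleton (g x))
  have hx : x ∈ f ⁻¹' S := by rw [hS]; rfl
  have hy : y ∈ f ⁻¹' S := by rw [Set.mem_preimage, ← h]; exact hx
  rw [hS] at hy
  exact hy.symm

/-- Conditional independence given `σ(f)` yields the product formula on each fibre of `f`. -/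
lemma measureReal_fiber_of_condIndep {Ω β : Type*} {m₁ m₂ : MeasurableSpace Ω}
    {mΩ : MeasurableSpace Ω} [StandardBorelSpace Ω] [MeasurableSpace β] [MeasurableSingletonClass β]
    {f : Ω → β}
    (hf : MeasurableSpace.comap f inferInstance ≤ mΩ) (hm₁ : m₁ ≤ mΩ) (hm₂ : m₂ ≤ mΩ)
    {π : Measure Ω} [IsFiniteMeasure π]
    (h : CondIndep (MeasurableSpace.comap f inferInstance) m₁ m₂ hf π)
    {A B : Set Ω} (hA : MeasurableSet[m₁] A) (hB : MeasurableSet[m₂] B) (c : β) :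
    π.real ((A ∩ B) ∩ f ⁻¹' {c}) * π.real (f ⁻¹' {c}) =
      π.real (A ∩ f ⁻¹' {c}) * π.real (B ∩ f ⁻¹' {c}) := by
  have hG : MeasurableSet[MeasurableSpace.comap f inferInstance] (f ⁻¹' {c}) :=
    ⟨{c}, measurableSet_singleton c, rfl⟩
  have hprod := (condIndep_iff _ _ _ hf hm₁ hm₂ π).1 h A B hA hB
  rcases (f ⁻¹' {c}).eq_empty_or_nonempty with hE | ⟨z, hz⟩
  · simp [hE]
  have key : ∀ S : Set Ω, MeasurableSet S →
      ∫ x in f ⁻¹' {c}, (π⟦S | MeasurableSpace.comap f inferInstance⟧) x ∂π =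
        π.real (S ∩ f ⁻¹' {c}) := by
    intro S hS
    rw [setIntegral_condExp hf ((integrable_const _).indicator hS) hG,
      integral_indicator hS, setIntegral_const, smul_eq_mul, mul_one,
      measureReal_restrict_apply hS]
  have hconst : ∀ S : Set Ω, ∀ x ∈ f ⁻¹' {c},
      (π⟦S | MeasurableSpace.comap f inferInstance⟧) x =
        (π⟦S | MeasurableSpace.comap f inferInstance⟧) z := by
    intro S x hx
    refine eq_of_measurable_comap (f := f) stronglyMeasurable_condExp.measurable ?_
    rw [Set.mem_preimage, Set.mem_singleton_iff] at hx hz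
    rw [hx, hz]
  have val : ∀ S : Set Ω, MeasurableSet S → π.real (S ∩ f ⁻¹' {c}) =
      π.real (f ⁻¹' {c}) * (π⟦S | MeasurableSpace.comap f inferInstance⟧) z := by
    intro S hS
    rw [← key S hS, setIntegral_congr_fun (hf _ hG) (hconst S), setIntegral_const, smul_eq_mul]
  have hAB : π.real ((A ∩ B) ∩ f ⁻¹' {c}) = π.real (f ⁻¹' {c}) *
      ((π⟦A | MeasurableSpace.comap f inferInstance⟧) z *
        (π⟦B | MeasurableSpace.comap f inferInstance⟧) z) := by
    rw [← key _ ((hm₁ _ hA).inter (hm₂ _ hB)), integral_congr_ae (ae_restrict_of_ae hprod),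
      setIntegral_congr_fun (g := fun _ => (π⟦A | MeasurableSpace.comap f inferInstance⟧) z *
        (π⟦B | MeasurableSpace.comap f inferInstance⟧) z) (hf _ hG), setIntegral_const, smul_eq_mul]
    intro x hx
    simp only [Pi.mul_apply]
    rw [hconst A x hx, hconst B x hx]
  rw [hAB, val A (hm₁ _ hA), val B (hm₂ _ hB)]
  ring

/-- Along a constant prefix, a bicausal coupling moves each component by its own kernel. -/
lemma IsBicausal.measureReal_constCyl {T : ℕ} {π : Measure (Traj 1 T × Traj 1 T)}
    [IsFiniteMeasure π] (hπ : IsBicausal 1 T π) {n : ℕ} (hn : 1 ≤ n) (h : n + 1 ≤ T) (s : ℝ) :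
    π.real (constCyl T s (n + 1) ×ˢ constCyl T s n) * π.real (Prod.fst ⁻¹' constCyl T s n) =
        π.real (constCyl T s n ×ˢ constCyl T s n) *
          π.real (Prod.fst ⁻¹' constCyl T s (n + 1)) ∧
      π.real (constCyl T s n ×ˢ constCyl T s (n + 1)) * π.real (Prod.snd ⁻¹' constCyl T s n) =
        π.real (constCyl T s n ×ˢ constCyl T s n) *
          π.real (Prod.snd ⁻¹' constCyl T s (n + 1)) := by
  obtain ⟨hX, hY⟩ := hπ n hn h
  have hn' : n ≤ T := Nat.le_of_succ_le h
  have hsub := constCyl_succ_subset (T := T) s n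
  have hpre := constCyl_eq_preimage hn' s
  constructor
  · have hA : MeasurableSet[sigmaY 1 T hn'] (Prod.snd ⁻¹' constCyl T s n) :=
      ⟨{fun _ _ => s}, measurableSet_singleton _, by rw [hpre]; rfl⟩
    have hB : MeasurableSet[sigmaX 1 T (le_refl T)] (Prod.fst ⁻¹' constCyl T s (n + 1)) :=
      ⟨constCyl T s (n + 1), measurableSet_constCyl _ _, rfl⟩
    have key := measureReal_fiber_of_condIndep (sigmaX_le 1 T hn') (sigmaY_le 1 T hn')
      (sigmaX_le 1 T le_rfl) hX hA hB (fun _ _ => s)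
    have hG : (fun ω : Traj 1 T × Traj 1 T => restr 1 hn' ω.1) ⁻¹' {fun _ _ => s} =
        Prod.fst ⁻¹' constCyl T s n := by rw [hpre]; rfl
    rw [hG] at key
    convert key using 3
    · ext ω
      simp only [Set.mem_prod, Set.mem_inter_iff, Set.mem_preimage]
      have := @hsub ω.1
      tauto
    · ext ω
      simp only [Set.mem_prod, Set.mem_inter_iff, Set.mem_preimage]
      tauto
    · ext ω
      simp only [Set.mem_inter_iff, Set.mem_preimage]
      have := @hsub ω.1
      tauto
  · have hA : MeasurableSet[sigmaX 1 T hn'] (Prod.fst ⁻¹' constCyl T s n) :=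
      ⟨{fun _ _ => s}, measurableSet_singleton _, by rw [hpre]; rfl⟩
    have hB : MeasurableSet[sigmaY 1 T (le_refl T)] (Prod.snd ⁻¹' constCyl T s (n + 1)) :=
      ⟨constCyl T s (n + 1), measurableSet_constCyl _ _, rfl⟩
    have key := measureReal_fiber_of_condIndep (sigmaY_le 1 T hn') (sigmaX_le 1 T hn')
      (sigmaY_le 1 T le_rfl) hY hA hB (fun _ _ => s)
    have hG : (fun ω : Traj 1 T × Traj 1 T => restr 1 hn' ω.2) ⁻¹' {fun _ _ => s} =
        Prod.snd ⁻¹' constCyl T s n := by rw [hpre]; rfl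
    rw [hG] at key
    convert key using 3
    · ext ω
      simp only [Set.mem_prod, Set.mem_inter_iff, Set.mem_preimage]
      have := @hsub ω.2
      tauto
    · ext ω
      simp only [Set.mem_prod, Set.mem_inter_iff, Set.mem_preimage]
    · ext ω
      simp only [Set.mem_inter_iff, Set.mem_preimage]
      have := @hsub ω.2
      tauto

lemma measurableSet_ne_pair (T : ℕ) :
    MeasurableSet {q : Traj 1 T × Traj 1 T | q.1 ≠ q.2} :=
  (measurableSet_eq_fun measurable_fst measurable_snd).compl

/-- Splitting off the pairs that separate at step `n + 1` from those that separate later. -/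
lemma abs_sub_add_le_measureReal_ne {T : ℕ} {π : Measure (Traj 1 T × Traj 1 T)}
    [IsFiniteMeasure π] (s : ℝ) (n : ℕ) :
    |π.real (constCyl T s (n + 1) ×ˢ constCyl T s n) -
        π.real (constCyl T s n ×ˢ constCyl T s (n + 1))| +
      π.real ((constCyl T s (n + 1) ×ˢ constCyl T s (n + 1)) ∩ {q | q.1 ≠ q.2}) ≤
    π.real ((constCyl T s n ×ˢ constCyl T s n) ∩ {q | q.1 ≠ q.2}) := by
  have hsub := constCyl_succ_subset (T := T) s n
  have hC := measurableSet_constCyl (T := T) s n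
  have hC' := measurableSet_constCyl (T := T) s (n + 1)
  set C := constCyl T s n
  set C' := constCyl T s (n + 1)
  have hd1 : π.real (C' ×ˢ C) = π.real (C' ×ˢ C') + π.real (C' ×ˢ (C \ C')) := by
    rw [← measureReal_union _ (hC'.prod (hC.diff hC')), ← Set.prod_union,
      Set.union_sdiff_cancel hsub]
    exact Set.disjoint_left.2 fun q h1 h2 => h2.2.2 h1.2
  have hd2 : π.real (C ×ˢ C') = π.real (C' ×ˢ C') + π.real ((C \ C') ×ˢ C') := by
    rw [← measureReal_union _ ((hC.diff hC').prod hC'), ← Set.union_prod,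
      Set.union_sdiff_cancel hsub]
    exact Set.disjoint_left.2 fun q h1 h2 => h2.1.2 h1.1
  have hU : π.real (C' ×ˢ (C \ C')) + π.real ((C \ C') ×ˢ C') +
      π.real ((C' ×ˢ C') ∩ {q | q.1 ≠ q.2}) ≤ π.real ((C ×ˢ C) ∩ {q | q.1 ≠ q.2}) := by
    rw [← measureReal_union _ ((hC.diff hC').prod hC'),
      ← measureReal_union _ ((hC'.prod hC').inter (measurableSet_ne_pair T))]
    · refine measureReal_mono ?_
      rintro q ((⟨h1, h2, h3⟩ | ⟨⟨h1, h2⟩, h3⟩) | ⟨⟨h1, h2⟩, h3⟩)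
      · exact ⟨⟨hsub h1, h2⟩, fun h => h3 (h ▸ h1)⟩
      · exact ⟨⟨h1, hsub h3⟩, fun h => h2 (h ▸ h3)⟩
      · exact ⟨⟨hsub h1, hsub h2⟩, h3⟩
    · refine Set.disjoint_left.2 ?_
      rintro q (h1 | h1) h2
      · exact h1.2.2 h2.1.2
      · exact h1.1.2 h2.1.1
    · exact Set.disjoint_left.2 fun q h1 h2 => h2.1.2 h1.1
  have h0 : 0 ≤ π.real (C' ×ˢ (C \ C')) := measureReal_nonneg
  have h1 : 0 ≤ π.real ((C \ C') ×ˢ C') := measureReal_nonneg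
  have : |π.real (C' ×ˢ C) - π.real (C ×ˢ C')| ≤
      π.real (C' ×ˢ (C \ C')) + π.real ((C \ C') ×ˢ C') := by
    rw [abs_le]
    constructor <;> linarith
  linarith

/-- If at least mass `b` separates at each step, the losses along the constant prefix add up. -/
lemma mul_le_measureReal_ne {T : ℕ} {π : Measure (Traj 1 T × Traj 1 T)} [IsFiniteMeasure π]
    {s b : ℝ} (k : ℕ)
    (hb : ∀ n, n < k → b ≤ |π.real (constCyl T s (n + 2) ×ˢ constCyl T s (n + 1)) -
        π.real (constCyl T s (n + 1) ×ˢ constCyl T s (n + 2))|) :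
    k * b ≤ π.real ((constCyl T s 1 ×ˢ constCyl T s 1) ∩ {q | q.1 ≠ q.2}) := by
  suffices k * b + π.real ((constCyl T s (k + 1) ×ˢ constCyl T s (k + 1)) ∩ {q | q.1 ≠ q.2}) ≤
      π.real ((constCyl T s 1 ×ˢ constCyl T s 1) ∩ {q | q.1 ≠ q.2}) by
    have h0 : 0 ≤ π.real ((constCyl T s (k + 1) ×ˢ constCyl T s (k + 1)) ∩ {q | q.1 ≠ q.2}) :=
      measureReal_nonneg
    linarith
  induction k with
  | zero => simp
  | succ k ih =>
    have h1 := ih fun n hn => hb n (hn.trans k.lt_succ_self)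
    have h2 := hb k k.lt_succ_self
    have h3 := abs_sub_add_le_measureReal_ne (π := π) s (k + 1)
    push_cast
    linarith

/-- The mass on which a coupling stays together inside `C` is at least the mass of `C` minus the
mass off the diagonal. -/
lemma measureReal_fst_sub_ne_le {T : ℕ} {π : Measure (Traj 1 T × Traj 1 T)} [IsFiniteMeasure π]
    (C : Set (Traj 1 T)) :
    π.real (Prod.fst ⁻¹' C) - π.real {q | q.1 ≠ q.2} ≤ π.real (C ×ˢ C) := by
  have : π.real (Prod.fst ⁻¹' C) ≤ π.real ((C ×ˢ C) ∪ {q | q.1 ≠ q.2}) := by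
    refine measureReal_mono fun q hq => ?_
    by_cases h : q.1 = q.2
    · exact Or.inl ⟨hq, h ▸ hq⟩
    · exact Or.inr h
  linarith [measureReal_union_le (μ := π) (C ×ˢ C) {q | q.1 ≠ q.2}]

lemma measureReal_snd_sub_ne_le {T : ℕ} {π : Measure (Traj 1 T × Traj 1 T)} [IsFiniteMeasure π]
    (C : Set (Traj 1 T)) :
    π.real (Prod.snd ⁻¹' C) - π.real {q | q.1 ≠ q.2} ≤ π.real (C ×ˢ C) := by
  have : π.real (Prod.snd ⁻¹' C) ≤ π.real ((C ×ˢ C) ∪ {q | q.1 ≠ q.2}) := by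
    refine measureReal_mono fun q hq => ?_
    by_cases h : q.1 = q.2
    · exact Or.inl ⟨h ▸ hq, hq⟩
    · exact Or.inr h
  linarith [measureReal_union_le (μ := π) (C ×ˢ C) {q | q.1 ≠ q.2}]

/-- The mass of pairs separated by `C` is at least the difference of the marginal masses. -/
lemma measureReal_fst_sub_snd_le {T : ℕ} {π : Measure (Traj 1 T × Traj 1 T)} [IsFiniteMeasure π]
    (C : Set (Traj 1 T)) :
    π.real (Prod.fst ⁻¹' C) - π.real (Prod.snd ⁻¹' C) ≤ π.real (C ×ˢ Cᶜ) := by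
  have : π.real (Prod.fst ⁻¹' C) ≤ π.real ((C ×ˢ Cᶜ) ∪ Prod.snd ⁻¹' C) := by
    refine measureReal_mono fun q hq => ?_
    by_cases h : q.2 ∈ C
    · exact Or.inr h
    · exact Or.inl ⟨hq, h⟩
  linarith [measureReal_union_le (μ := π) (C ×ˢ Cᶜ) (Prod.snd ⁻¹' C)]

/-- Separation at the first step and separation along either constant prefix are disjoint. -/
lemma add_le_measureReal_ne {T : ℕ} (hT : 1 ≤ T) {π : Measure (Traj 1 T × Traj 1 T)}
    [IsFiniteMeasure π] :
    π.real (constCyl T 1 1 ×ˢ (constCyl T 1 1)ᶜ) +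
      π.real ((constCyl T 1 1 ×ˢ constCyl T 1 1) ∩ {q | q.1 ≠ q.2}) +
      π.real ((constCyl T (-1) 1 ×ˢ constCyl T (-1) 1) ∩ {q | q.1 ≠ q.2}) ≤
    π.real {q | q.1 ≠ q.2} := by
  have hC := measurableSet_constCyl (T := T) 1 1
  have hC' := measurableSet_constCyl (T := T) (-1) 1
  have hdisj : ∀ x, x ∈ constCyl T 1 1 → x ∉ constCyl T (-1) 1 := by
    intro x h1 h2
    have := (h1 ⟨0, hT⟩ Nat.zero_lt_one).symm.trans (h2 ⟨0, hT⟩ Nat.zero_lt_one)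
    have := congrFun this 0
    norm_num at this
  rw [← measureReal_union _ ((hC.prod hC).inter (measurableSet_ne_pair T)),
    ← measureReal_union _ ((hC'.prod hC').inter (measurableSet_ne_pair T))]
  · refine measureReal_mono ?_
    rintro q ((⟨h1, h2⟩ | ⟨-, h⟩) | ⟨-, h⟩)
    · exact fun h => h2 (h ▸ h1)
    · exact h
    · exact h
  · refine Set.disjoint_left.2 ?_
    rintro q (h1 | h1) h2
    · exact hdisj _ h1.1 h2.1.1
    · exact hdisj _ h1.1.1 h2.1.1
  · exact Set.disjoint_left.2 fun q h1 h2 => h1.2 h2.1.2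

lemma mul_sq_le_sub_of_kernels {p δ r e a b K : ℝ} (hp : 0 < p) (hδ : 0 < δ) (hr : 0 ≤ r)
    (hr1 : r ≤ 1) (he : p - K * δ ≤ e) (hK : (K + 1) * δ ≤ r * p)
    (ha : a * (p + δ) = e * (r * p + δ)) (hb : b * p = e * (r * p)) :
    δ * (1 - r) ^ 2 ≤ a - b := by
  have hb' : b = e * r := by
    apply mul_right_cancel₀ hp.ne'
    linarith
  have he' : (1 - r) * (p + δ) ≤ e := by nlinarith
  have hmul : (a - b) * (p + δ) = e * (δ * (1 - r)) := by
    rw [sub_mul, ha, hb']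
    ring
  have hpos : 0 < p + δ := by linarith
  refine le_of_mul_le_mul_right ?_ hpos
  rw [hmul]
  have : 0 ≤ δ * (1 - r) := mul_nonneg hδ.le (by linarith)
  nlinarith [mul_le_mul_of_nonneg_right he' this]

/-- The mixture giving mass `1 - δ` to `m` and mass `δ` to the point `x`. -/
def mixDirac {α : Type*} [MeasurableSpace α] (δ : ℝ) (m : Measure α) (x : α) : Measure α :=
  ENNReal.ofReal (1 - δ) • m + ENNReal.ofReal δ • Measure.dirac x

lemma isProbabilityMeasure_mixDirac {α : Type*} [MeasurableSpace α] {δ : ℝ} (h0 : 0 ≤ δ)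
    (h1 : δ ≤ 1) (m : Measure α) [IsProbabilityMeasure m] (x : α) :
    IsProbabilityMeasure (mixDirac δ m x) := by
  constructor
  simp only [mixDirac, Measure.coe_add, Measure.coe_smul, Pi.add_apply, Pi.smul_apply,
    measure_univ, smul_eq_mul, mul_one]
  rw [← ENNReal.ofReal_add (by linarith) h0]
  simp

lemma map_mixDirac {α β : Type*} [MeasurableSpace α] [MeasurableSpace β] (δ : ℝ) (m : Measure α)
    (x : α) {f : α → β} (hf : Measurable f) :
    (mixDirac δ m x).map f = mixDirac δ (m.map f) (f x) := by
  rw [mixDirac, Measure.map_add _ _ hf, Measure.map_smul, Measure.map_smul, Measure.map_dirac' hf]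
  rfl

lemma measureReal_mixDirac {α : Type*} [MeasurableSpace α] {δ : ℝ} (h0 : 0 ≤ δ) (h1 : δ ≤ 1)
    (m : Measure α) [IsProbabilityMeasure m] (x : α) {C : Set α} (hC : MeasurableSet C) :
    (mixDirac δ m x).real C = (1 - δ) * m.real C + δ * C.indicator 1 x := by
  have h : 0 ≤ 1 - δ := by linarith
  rw [measureReal_def, mixDirac, Measure.add_apply, Measure.smul_apply, Measure.smul_apply,
    smul_eq_mul, smul_eq_mul, ENNReal.toReal_add (by finiteness) (by finiteness),
    ENNReal.toReal_mul, ENNReal.toReal_mul, ENNReal.toReal_ofReal h, ENNReal.toReal_ofReal h0,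
    Measure.dirac_apply' _ hC, measureReal_def]
  by_cases hx : x ∈ C <;> simp [hx]

lemma setLIntegral_ne_one_weight {T : ℕ} (π : Measure (Traj 1 T × Traj 1 T)) [IsFiniteMeasure π] :
    ∫⁻ _ in {q : Traj 1 T × Traj 1 T | q.1 ≠ q.2},
      (ENNReal.ofReal 1 + ENNReal.ofReal 1) ∂π = ENNReal.ofReal (2 * π.real {q | q.1 ≠ q.2}) := by
  rw [setLIntegral_const, ENNReal.ofReal_mul zero_le_two, ofReal_measureReal,
    ← ENNReal.ofReal_add zero_le_one zero_le_one]
  norm_num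

lemma TVw_mixDirac_le {T : ℕ} {δ : ℝ} (h0 : 0 ≤ δ) (h1 : δ ≤ 1) (m : Measure (Traj 1 T))
    [IsProbabilityMeasure m] (x y : Traj 1 T) :
    TVw (fun _ => (1 : ℝ)) (mixDirac δ m x) (mixDirac δ m y) ≤ ENNReal.ofReal (2 * δ) := by
  have hdiag : Measurable fun z : Traj 1 T => (z, z) := measurable_id.prodMk measurable_id
  have : IsProbabilityMeasure (m.map fun z => (z, z)) :=
    Measure.isProbabilityMeasure_map hdiag.aemeasurable
  have hprob := isProbabilityMeasure_mixDirac h0 h1 (m.map fun z => (z, z)) (x, y)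
  have hmem : mixDirac δ (m.map fun z => (z, z)) (x, y) ∈ Cpl (mixDirac δ m x) (mixDirac δ m y) := by
    refine ⟨hprob, ?_, ?_⟩
    · rw [map_mixDirac _ _ _ measurable_fst, Measure.map_map measurable_fst hdiag]
      exact congrArg (mixDirac δ · x) Measure.map_id
    · rw [map_mixDirac _ _ _ measurable_snd, Measure.map_map measurable_snd hdiag]
      exact congrArg (mixDirac δ · y) Measure.map_id
  refine (iInf₂_le _ hmem).trans ?_
  rw [setLIntegral_ne_one_weight]
  refine ENNReal.ofReal_le_ofReal ?_
  rw [measureReal_mixDirac h0 h1 _ _ (measurableSet_ne_pair T),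
    map_measureReal_apply hdiag (measurableSet_ne_pair T)]
  have hle : Set.indicator {q : Traj 1 T × Traj 1 T | q.1 ≠ q.2} (1 : Traj 1 T × Traj 1 T → ℝ) (x, y) ≤ 1 :=
    Set.indicator_le_self' (fun _ _ => zero_le_one) _
  simp only [ne_eq, Set.preimage_ofPred_eq, not_true_eq_false, Set.ofPred_false,
    measureReal_empty, mul_zero, zero_add] at hle ⊢
  nlinarith

/-- The path equal to `s` as long as `u ≤ r ^ i`, and `0` afterwards. -/
def exitPath (T : ℕ) (r s u : ℝ) : Traj 1 T := fun i _ => if u ≤ r ^ i.val then s else 0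

lemma measurable_exitPath (T : ℕ) (r s : ℝ) : Measurable (exitPath T r s) :=
  measurable_pi_lambda _ fun _ => measurable_pi_lambda _ fun _ =>
    Measurable.ite measurableSet_Iic measurable_const measurable_const

instance : IsProbabilityMeasure (volume.restrict (Set.Ioc (0 : ℝ) 1)) := ⟨by simp⟩

/-- The law of a path started in `±1` with probability `1 / 2` each, which survives each step with
probability `r` and sits at `0` once it is killed. -/
def exitLaw (T : ℕ) (r : ℝ) : Measure (Traj 1 T) :=
  ENNReal.ofReal (1 / 2) • (volume.restrict (Set.Ioc (0 : ℝ) 1)).map (exitPath T r 1) +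
    ENNReal.ofReal (1 / 2) • (volume.restrict (Set.Ioc (0 : ℝ) 1)).map (exitPath T r (-1))

instance (T : ℕ) (r : ℝ) : IsProbabilityMeasure (exitLaw T r) := by
  have h (s : ℝ) :
      IsProbabilityMeasure ((volume.restrict (Set.Ioc (0 : ℝ) 1)).map (exitPath T r s)) :=
    Measure.isProbabilityMeasure_map (measurable_exitPath T r s).aemeasurable
  have h1 := h 1
  have h2 := h (-1)
  constructor
  simp only [exitLaw, Measure.coe_add, Measure.coe_smul, Pi.add_apply, Pi.smul_apply,
    measure_univ, smul_eq_mul, mul_one]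
  rw [← ENNReal.ofReal_add (by norm_num) (by norm_num)]
  norm_num

lemma map_exitPath_constCyl_self {T n : ℕ} (hn : n < T) {r s : ℝ} (hr : 0 ≤ r) (hr1 : r ≤ 1)
    (hs : s ≠ 0) :
    (volume.restrict (Set.Ioc (0 : ℝ) 1)).map (exitPath T r s) (constCyl T s (n + 1)) =
      ENNReal.ofReal (r ^ n) := by
  rw [Measure.map_apply (measurable_exitPath T r s) (measurableSet_constCyl _ _)]
  have : exitPath T r s ⁻¹' constCyl T s (n + 1) = Set.Iic (r ^ n) := by
    ext u
    simp only [Set.mem_preimage, constCyl, Set.mem_ofPred_eq, Set.mem_Iic]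
    constructor
    · intro h
      by_contra hu
      have := congrFun (h ⟨n, hn⟩ n.lt_succ_self) 0
      simp only [exitPath, hu, if_false] at this
      exact hs this.symm
    · intro h i hi
      funext _
      rw [exitPath, if_pos (h.trans (pow_le_pow_of_le_one hr hr1 (Nat.lt_succ_iff.1 hi)))]
  rw [this, Measure.restrict_apply measurableSet_Iic, Set.inter_comm, Set.Ioc_inter_Iic,
    inf_of_le_right (pow_le_one₀ hr hr1), Real.volume_Ioc, sub_zero]

lemma map_exitPath_constCyl_of_ne {T n : ℕ} (hT : 1 ≤ T) {r s s' : ℝ} (hs : s ≠ s') :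
    (volume.restrict (Set.Ioc (0 : ℝ) 1)).map (exitPath T r s) (constCyl T s' (n + 1)) = 0 := by
  rw [Measure.map_apply (measurable_exitPath T r s) (measurableSet_constCyl _ _),
    Measure.restrict_apply ((measurable_exitPath T r s) (measurableSet_constCyl _ _))]
  convert measure_empty (μ := (volume : Measure ℝ))
  refine Set.eq_empty_of_forall_notMem fun u hu => hs ?_
  have := congrFun (hu.1 ⟨0, hT⟩ n.succ_pos) 0
  simpa [exitPath, hu.2.2] using this

lemma measureReal_exitLaw {T n : ℕ} (hn : n < T) {r s : ℝ} (hr : 0 ≤ r) (hr1 : r ≤ 1)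
    (hs : s = 1 ∨ s = -1) : (exitLaw T r).real (constCyl T s (n + 1)) = r ^ n / 2 := by
  have hT : 1 ≤ T := by omega
  rw [measureReal_def, exitLaw, Measure.add_apply, Measure.smul_apply, Measure.smul_apply]
  rcases hs with rfl | rfl
  · rw [map_exitPath_constCyl_self hn hr hr1 (by norm_num),
      map_exitPath_constCyl_of_ne hT (by norm_num), smul_zero, add_zero, smul_eq_mul,
      ENNReal.toReal_mul, ENNReal.toReal_ofReal (by norm_num), ENNReal.toReal_ofReal (by positivity)]
    ring
  · rw [map_exitPath_constCyl_self hn hr hr1 (by norm_num),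
      map_exitPath_constCyl_of_ne hT (by norm_num), smul_zero, zero_add, smul_eq_mul,
      ENNReal.toReal_mul, ENNReal.toReal_ofReal (by norm_num), ENNReal.toReal_ofReal (by positivity)]
    ring

lemma measureReal_mixDirac_exitLaw_same {T n : ℕ} (hn : n < T) {r s δ : ℝ} (hr : 0 ≤ r)
    (hr1 : r ≤ 1) (h0 : 0 ≤ δ) (h1 : δ ≤ 1) (hs : s = 1 ∨ s = -1) :
    (mixDirac δ (exitLaw T r) fun _ _ => s).real (constCyl T s (n + 1)) =
      (1 - δ) * (r ^ n / 2) + δ := by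
  rw [measureReal_mixDirac h0 h1 _ _ (measurableSet_constCyl _ _), measureReal_exitLaw hn hr hr1 hs,
    Set.indicator_of_mem (show (fun _ _ => s) ∈ constCyl T s (n + 1) from fun _ _ => rfl), Pi.one_apply, mul_one]

lemma measureReal_mixDirac_exitLaw_of_ne {T n : ℕ} (hn : n < T) {r s s' δ : ℝ} (hr : 0 ≤ r)
    (hr1 : r ≤ 1) (h0 : 0 ≤ δ) (h1 : δ ≤ 1) (hs : s = 1 ∨ s = -1) (hs' : s' ≠ s) :
    (mixDirac δ (exitLaw T r) fun _ _ => s').real (constCyl T s (n + 1)) =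
      (1 - δ) * (r ^ n / 2) := by
  rw [measureReal_mixDirac h0 h1 _ _ (measurableSet_constCyl _ _), measureReal_exitLaw hn hr hr1 hs,
    Set.indicator_of_notMem, mul_zero, add_zero]
  exact fun h => hs' (congrFun (h ⟨0, by omega⟩ n.succ_pos) 0)

/-- Any coupling of the two perturbed exit laws separates at the first step with mass `δ`. -/
lemma le_measureReal_first_step {T : ℕ} (hT : 1 ≤ T) {r δ : ℝ} (hr : 0 ≤ r) (hr1 : r ≤ 1)
    (h0 : 0 ≤ δ) (h1 : δ ≤ 1) {π : Measure (Traj 1 T × Traj 1 T)}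
    (hπ : π ∈ Cpl (mixDirac δ (exitLaw T r) fun _ _ => 1)
      (mixDirac δ (exitLaw T r) fun _ _ => -1)) :
    δ ≤ π.real (constCyl T 1 1 ×ˢ (constCyl T 1 1)ᶜ) := by
  obtain ⟨hprob, hμ, hν⟩ := hπ
  have hC := measurableSet_constCyl (T := T) 1 1
  have h := measureReal_fst_sub_snd_le (π := π) (constCyl T 1 1)
  rw [← map_measureReal_apply measurable_fst hC, ← map_measureReal_apply measurable_snd hC, hμ, hν,
    measureReal_mixDirac_exitLaw_same hT hr hr1 h0 h1 (Or.inl rfl),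
    measureReal_mixDirac_exitLaw_of_ne hT hr hr1 h0 h1 (Or.inl rfl) (by norm_num)] at h
  linarith

/-- A bicausal coupling of the two perturbed exit laws that rarely separates still loses almost
mass `δ` at each step along each of the two constant prefixes. -/
lemma le_abs_sub_of_bicausal {T n : ℕ} (hn : n + 1 < T) {r δ K s : ℝ} (hr : 0 < r) (hr1 : r ≤ 1)
    (h0 : 0 < δ) (h1 : δ < 1) (hs : s = 1 ∨ s = -1)
    (hK : (K + 1) * δ ≤ r * ((1 - δ) * (r ^ n / 2)))
    {π : Measure (Traj 1 T × Traj 1 T)} [IsFiniteMeasure π]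
    (hπ : π ∈ Cpl (mixDirac δ (exitLaw T r) fun _ _ => 1)
      (mixDirac δ (exitLaw T r) fun _ _ => -1))
    (hbi : IsBicausal 1 T π) (hlt : π.real {q | q.1 ≠ q.2} ≤ K * δ) :
    δ * (1 - r) ^ 2 ≤ |π.real (constCyl T s (n + 2) ×ˢ constCyl T s (n + 1)) -
        π.real (constCyl T s (n + 1) ×ˢ constCyl T s (n + 2))| := by
  obtain ⟨hprob, hμ, hν⟩ := hπ
  obtain ⟨hX, hY⟩ := hbi.measureReal_constCyl (Nat.le_add_left 1 n) hn s
  have hC := measurableSet_constCyl (T := T) s (n + 1)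
  have hC' := measurableSet_constCyl (T := T) s (n + 2)
  have hfst := measureReal_fst_sub_ne_le (π := π) (constCyl T s (n + 1))
  have hsnd := measureReal_snd_sub_ne_le (π := π) (constCyl T s (n + 1))
  have hp : 0 < (1 - δ) * (r ^ n / 2) := by
    have : 0 < 1 - δ := by linarith
    positivity
  have hpow : (1 - δ) * (r ^ (n + 1) / 2) = r * ((1 - δ) * (r ^ n / 2)) := by ring
  rw [← map_measureReal_apply measurable_fst hC, hμ] at hfst
  rw [← map_measureReal_apply measurable_snd hC, hν] at hsnd
  rw [← map_measureReal_apply measurable_fst hC, ← map_measureReal_apply measurable_fst hC',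
    hμ] at hX
  rw [← map_measureReal_apply measurable_snd hC, ← map_measureReal_apply measurable_snd hC',
    hν] at hY
  have hn' : n < T := Nat.lt_of_succ_lt hn
  rcases hs with rfl | rfl
  · rw [measureReal_mixDirac_exitLaw_same hn' hr.le hr1 h0.le h1.le (Or.inl rfl),
      measureReal_mixDirac_exitLaw_same hn hr.le hr1 h0.le h1.le (Or.inl rfl), hpow] at hX
    rw [measureReal_mixDirac_exitLaw_of_ne hn' hr.le hr1 h0.le h1.le (Or.inl rfl) (by norm_num),
      measureReal_mixDirac_exitLaw_of_ne hn hr.le hr1 h0.le h1.le (Or.inl rfl) (by norm_num),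
      hpow] at hY
    rw [measureReal_mixDirac_exitLaw_of_ne hn' hr.le hr1 h0.le h1.le (Or.inl rfl)
      (by norm_num)] at hsnd
    exact (mul_sq_le_sub_of_kernels hp h0 hr.le hr1 (by linarith) hK hX hY).trans (le_abs_self _)
  · rw [measureReal_mixDirac_exitLaw_of_ne hn' hr.le hr1 h0.le h1.le (Or.inr rfl) (by norm_num),
      measureReal_mixDirac_exitLaw_of_ne hn hr.le hr1 h0.le h1.le (Or.inr rfl) (by norm_num),
      hpow] at hX
    rw [measureReal_mixDirac_exitLaw_same hn' hr.le hr1 h0.le h1.le (Or.inr rfl),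
      measureReal_mixDirac_exitLaw_same hn hr.le hr1 h0.le h1.le (Or.inr rfl), hpow] at hY
    rw [measureReal_mixDirac_exitLaw_of_ne hn' hr.le hr1 h0.le h1.le (Or.inr rfl)
      (by norm_num)] at hfst
    rw [abs_sub_comm]
    exact (mul_sq_le_sub_of_kernels hp h0 hr.le hr1 (by linarith) hK hY hX).trans (le_abs_self _)

/-- Bicausal couplings of the perturbed exit laws separate with mass almost `(2T - 1) δ`. -/
lemma mul_le_measureReal_ne_of_bicausal {T : ℕ} (hT : 1 ≤ T) {r δ : ℝ} (hr : 0 < r)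
    (hr1 : r ≤ 1) (h0 : 0 < δ) (h1 : δ ≤ 1 / 2) (hδ : 2 * T * δ ≤ r ^ T / 4)
    {π : Measure (Traj 1 T × Traj 1 T)} [IsFiniteMeasure π]
    (hπ : π ∈ Cpl (mixDirac δ (exitLaw T r) fun _ _ => 1)
      (mixDirac δ (exitLaw T r) fun _ _ => -1))
    (hbi : IsBicausal 1 T π) :
    (1 + 2 * (T - 1) * (1 - r) ^ 2) * δ ≤ π.real {q | q.1 ≠ q.2} := by
  have hT' : (1 : ℝ) ≤ T := by exact_mod_cast hT
  rcases le_total (π.real {q | q.1 ≠ q.2}) ((2 * T - 1) * δ) with hle | hle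
  · have hstep : ∀ s : ℝ, s = 1 ∨ s = -1 → ((T - 1 : ℕ) : ℝ) * (δ * (1 - r) ^ 2) ≤
        π.real ((constCyl T s 1 ×ˢ constCyl T s 1) ∩ {q | q.1 ≠ q.2}) := by
      intro s hs
      refine mul_le_measureReal_ne (T - 1) fun n hn => ?_
      refine le_abs_sub_of_bicausal (by omega) hr hr1 h0 (by linarith) hs ?_ hπ hbi hle
      have hpow : r ^ T ≤ r ^ (n + 1) := pow_le_pow_of_le_one hr.le hr1 (by omega)
      have hpos : 0 < r ^ (n + 1) := by positivity
      have : r * ((1 - δ) * (r ^ n / 2)) = (1 - δ) * (r ^ (n + 1) / 2) := by ring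
      rw [this]
      nlinarith
    have hsum := add_le_measureReal_ne hT (π := π)
    have hp := hstep 1 (Or.inl rfl)
    have hm := hstep (-1) (Or.inr rfl)
    have hf := le_measureReal_first_step hT hr.le hr1 h0.le (by linarith) hπ
    rw [Nat.cast_sub hT, Nat.cast_one] at hp hm
    linarith
  · refine le_trans ?_ hle
    refine mul_le_mul_of_nonneg_right ?_ h0.le
    have : (1 - r) ^ 2 ≤ 1 := pow_le_one₀ (by linarith) (by linarith)
    nlinarith

/-- Sharpness of the constant `2T - 1`: for every `T ≥ 1` and `ε > 0` there
are probability measures `μ, ν` on `ℝ^T` with `TV(μ,ν) > 0` and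
`ATV(μ,ν) ≥ (2T - 1 - ε) TV(μ,ν)`. -/
theorem atv_tv_constant_sharp (T : ℕ) (hT : 1 ≤ T) (ε : ℝ) (hε : 0 < ε) :
    ∃ μ ν : Measure (Traj 1 T),
      IsProbabilityMeasure μ ∧ IsProbabilityMeasure ν ∧
      0 < TVw (fun _ => (1 : ℝ)) μ ν ∧
      ENNReal.ofReal (2 * (T : ℝ) - 1 - ε) * TVw (fun _ => (1 : ℝ)) μ ν ≤
        ATVw (fun _ => (1 : ℝ)) μ ν := by
  have hT' : (1 : ℝ) ≤ T := by exact_mod_cast hT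
  set r : ℝ := min (1 / 2) (ε / (4 * T)) with hr_def
  have hr : 0 < r := lt_min (by norm_num) (by positivity)
  have hr1 : r ≤ 1 := (min_le_left _ _).trans (by norm_num)
  have hrε : 4 * T * r ≤ ε := by
    have : r ≤ ε / (4 * T) := min_le_right _ _
    rwa [le_div_iff₀ (by positivity), mul_comm] at this
  set δ : ℝ := r ^ T / (8 * T) with hδ_def
  have h0 : 0 < δ := by positivity
  have hδ : 2 * T * δ = r ^ T / 4 := by
    rw [hδ_def]
    field_simp
    norm_num
  have h1 : δ ≤ 1 / 2 := by
    have : r ^ T ≤ 1 := pow_le_one₀ hr.le hr1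
    nlinarith
  refine ⟨mixDirac δ (exitLaw T r) fun _ _ => 1, mixDirac δ (exitLaw T r) fun _ _ => -1,
    isProbabilityMeasure_mixDirac h0.le (by linarith) _ _,
    isProbabilityMeasure_mixDirac h0.le (by linarith) _ _, ?_, ?_⟩
  · refine lt_of_lt_of_le (ENNReal.ofReal_pos.2 (by linarith : 0 < 2 * δ)) ?_
    refine le_iInf₂ fun π hπ => ?_
    have := hπ.1
    rw [setLIntegral_ne_one_weight]
    refine ENNReal.ofReal_le_ofReal ?_
    have h := le_measureReal_first_step hT hr.le hr1 h0.le (by linarith) hπ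
    have hle : π.real (constCyl T 1 1 ×ˢ (constCyl T 1 1)ᶜ) ≤ π.real {q | q.1 ≠ q.2} :=
      measureReal_mono fun q hq heq => hq.2 (heq ▸ hq.1)
    linarith
  · refine (mul_le_mul_right (TVw_mixDirac_le h0.le (by linarith) _ _ _) _).trans ?_
    rw [← ENNReal.ofReal_mul' (by linarith)]
    refine le_iInf₂ fun π hπ => ?_
    obtain ⟨hcpl, hfin, hbi⟩ := hπ
    rw [setLIntegral_ne_one_weight]
    refine ENNReal.ofReal_le_ofReal ?_
    have h := mul_le_measureReal_ne_of_bicausal hT hr hr1 h0 h1 hδ.le hcpl hbi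
    have hconst : 2 * (T : ℝ) - 1 - ε ≤ 1 + 2 * (T - 1) * (1 - r) ^ 2 := by nlinarith
    nlinarith [mul_le_mul_of_nonneg_right hconst h0.le]

end
end

section
/- For every integer T ≥ 1 (with d = 1), all constants c_2, …, c_T ≥ 0, and every ε > 0, there exist a measurable weighting function w : ℝ^T → [0, ∞), measurable maps w_t : ℝ^t → [0, ∞) for t = 1, …, T with w_T = w, and Borel probability measures μ, ν on ℝ^T with ∫ w dμ + ∫ w dν < ∞, such that: (a) for ν-almost every x and every t = 2, …, T, w_{t−1}(x_{1:t−1}) ≤ w_t(x_{1:t}) and ∫ w_t(x_{1:t−1}, x̃_t) ν_{x_{1:t−1}}(dx̃_t) ≤ (1 + c_t) · w_{t−1}(x_{1:t−1}); (b) 0 < TV_w(μ, ν) < ∞; and (c) ATV_w(μ, ν) ≥ (1 + 2 Σ_{t=1}^{T−1} ∏_{s=t+1}^{T} (1 + c_s) − ε) · TV_w(μ, ν). Hence the constant 1 + 2 Σ_{t=1}^{T−1} ∏_{s=t+1}^{T}(1 + c_s) in the weighted bound ATV_w ≤ (1 + 2 Σ∏(1 + c_s)) · TV_w is sharp. -/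
open MeasureTheory ProbabilityTheory
open scoped ENNReal

noncomputable section

/-- Conditional independence given `σ(f)`, evaluated on an atom `f ⁻¹' {b}`. -/
lemma CondIndep.measureReal_inter_fiber_mul {Ω β : Type*} {m₁ m₂ : MeasurableSpace Ω}
    {mΩ : MeasurableSpace Ω} [StandardBorelSpace Ω] [MeasurableSpace β]
    [MeasurableSingletonClass β] {f : Ω → β} (hf : Measurable f) (hm₁ : m₁ ≤ mΩ) (hm₂ : m₂ ≤ mΩ)
    {π : Measure Ω} [IsFiniteMeasure π]
    (hind : CondIndep (MeasurableSpace.comap f inferInstance) m₁ m₂ hf.comap_le π)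
    {B C : Set Ω} (hB : MeasurableSet[m₁] B) (hC : MeasurableSet[m₂] C) (b : β) :
    π.real (f ⁻¹' {b} ∩ (B ∩ C)) * π.real (f ⁻¹' {b})
      = π.real (f ⁻¹' {b} ∩ B) * π.real (f ⁻¹' {b} ∩ C) := by
  set A : Set Ω := f ⁻¹' {b} with hA
  have hAm' : MeasurableSet[MeasurableSpace.comap f inferInstance] A :=
    ⟨{b}, measurableSet_singleton b, rfl⟩
  have hAm : MeasurableSet A := hf.comap_le _ hAm'
  have key : ∀ S : Set Ω, MeasurableSet S → ∃ g : ℝ,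
      (∀ ω ∈ A, (π⟦S | MeasurableSpace.comap f inferInstance⟧) ω = g) ∧
        π.real (A ∩ S) = g * π.real A := by
    intro S hS
    have hsm : StronglyMeasurable[MeasurableSpace.comap f inferInstance]
        (π⟦S | MeasurableSpace.comap f inferInstance⟧) := stronglyMeasurable_condExp
    obtain ⟨g, -, hg⟩ := hsm.measurable.exists_eq_measurable_comp
    have hconst : ∀ ω ∈ A, (π⟦S | MeasurableSpace.comap f inferInstance⟧) ω = g b := by
      intro ω hω
      rw [hg]
      exact congrArg g hω
    refine ⟨g b, hconst, ?_⟩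
    have h := setIntegral_condExp (μ := π) hf.comap_le
      (f := S.indicator (fun _ => (1 : ℝ))) ((integrable_const 1).indicator hS) hAm'
    rw [setIntegral_congr_fun hAm hconst, setIntegral_const, setIntegral_indicator hS,
      setIntegral_const] at h
    simp only [smul_eq_mul, mul_one] at h
    rw [← h, mul_comm]
  obtain ⟨gB, hgB, hB'⟩ := key B (hm₁ _ hB)
  obtain ⟨gC, hgC, hC'⟩ := key C (hm₂ _ hC)
  obtain ⟨gBC, hgBC, hBC'⟩ := key (B ∩ C) ((hm₁ _ hB).inter (hm₂ _ hC))
  by_cases h0 : π A = 0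
  · have : π.real A = 0 := by simp [Measure.real, h0]
    rw [hB', this]
    simp
  have hae := (condIndep_iff _ _ _ hf.comap_le hm₁ hm₂ π).1 hind B C hB hC
  obtain ⟨ω, hω, hωA⟩ := ((frequently_ae_mem_iff.2 h0).and_eventually hae).exists
  simp only [Pi.mul_apply] at hωA
  rw [hgB ω hω, hgC ω hω, hgBC ω hω] at hωA
  rw [hB', hC', hBC', hωA]
  ring

/-- The path that stays at `0` strictly before time `k` and sits at `1` from time `k` on. -/
def stepPath (t k : ℕ) : Traj 1 t := fun i _ => if (i : ℕ) + 1 < k then 0 else 1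

lemma stepPath_eq_zero {t k : ℕ} (h : t < k) : stepPath t k = 0 := by
  funext i j
  have : (i : ℕ) + 1 < k := by omega
  simp [stepPath, this]

lemma stepPath_ne_zero {t k : ℕ} (hk : 1 ≤ k) (h : k ≤ t) : stepPath t k ≠ 0 := by
  intro h0
  have := congrFun (congrFun h0 ⟨k - 1, by omega⟩) 0
  simp [stepPath, show ¬ (k - 1 + 1 < k) by omega] at this

lemma stepPath_lt_ne {t j k : ℕ} (hj : 1 ≤ j) (hjt : j ≤ t) (hjk : j < k) :
    stepPath t j ≠ stepPath t k := by
  intro h0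
  have := congrFun (congrFun h0 ⟨j - 1, by omega⟩) 0
  simp [stepPath, show ¬ (j - 1 + 1 < j) by omega, show j - 1 + 1 < k by omega] at this

lemma stepPath_eq_iff {t j k : ℕ} (hj : 1 ≤ j) (hjt : j ≤ t) (hk : 1 ≤ k) (hkt : k ≤ t) :
    stepPath t j = stepPath t k ↔ j = k := by
  refine ⟨fun h => ?_, fun h => h ▸ rfl⟩
  rcases lt_trichotomy j k with hlt | heq | hgt
  · exact absurd h (stepPath_lt_ne hj hjt hlt)
  · exact heq
  · exact absurd h.symm (stepPath_lt_ne hk hkt hgt)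

lemma restr_stepPath {t T : ℕ} (h : t ≤ T) (k : ℕ) :
    restr 1 h (stepPath T k) = stepPath t k := rfl

lemma snoc_stepPath {t k : ℕ} (h : k ≤ t + 1) :
    (Fin.snoc (stepPath t k) (1 : Fin 1 → ℝ) : Traj 1 (t + 1)) = stepPath (t + 1) k := by
  funext i j
  refine Fin.lastCases ?_ (fun i => ?_) i
  · simp [stepPath, show ¬ (t + 1 < k) by omega]
  · simp [stepPath]

lemma snoc_zero_zero (t : ℕ) :
    (Fin.snoc (0 : Traj 1 t) (0 : Fin 1 → ℝ) : Traj 1 (t + 1)) = 0 := by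
  funext i j
  refine Fin.lastCases ?_ (fun i => ?_) i <;> simp

lemma snoc_zero_one (t : ℕ) :
    (Fin.snoc (0 : Traj 1 t) (1 : Fin 1 → ℝ) : Traj 1 (t + 1)) = stepPath (t + 1) (t + 1) := by
  rw [← stepPath_eq_zero (Nat.lt_succ_self t), snoc_stepPath le_rfl]

lemma restr_snoc {t : ℕ} (x : Traj 1 t) (y : Fin 1 → ℝ) :
    restr 1 (Nat.le_succ t) (Fin.snoc x y : Traj 1 (t + 1)) = x :=
  Fin.init_snoc (α := fun _ => Fin 1 → ℝ) y x

/-- One-step transition law at the zero path. -/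
def zeroStep (r : ℝ) (t : ℕ) : Measure (Fin 1 → ℝ) :=
  if t = 0 then Measure.dirac 0
  else ENNReal.ofReal r • Measure.dirac 0 + ENNReal.ofReal (1 - r) • Measure.dirac 1

open Classical in
/-- Transition kernel: the zero path stays at `0` with probability `r` (surely at time `0`), and
every other path moves to `1`. -/
def stepKernel (r : ℝ) (t : ℕ) (x : Traj 1 t) : Measure (Fin 1 → ℝ) :=
  if x = 0 then zeroStep r t else Measure.dirac 1

lemma measurable_stepKernel (r : ℝ) (t : ℕ) : Measurable (stepKernel r t) :=
  Measurable.ite (measurableSet_singleton 0) measurable_const measurable_const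

lemma isProbabilityMeasure_stepKernel {r : ℝ} (hr0 : 0 ≤ r) (hr1 : r ≤ 1) (t : ℕ)
    (x : Traj 1 t) : IsProbabilityMeasure (stepKernel r t x) := by
  unfold stepKernel zeroStep
  split_ifs
  · infer_instance
  · refine ⟨?_⟩
    simp only [Measure.add_apply, Measure.smul_apply, measure_univ, smul_eq_mul, mul_one]
    rw [← ENNReal.ofReal_add hr0 (by linarith)]
    simp
  · infer_instance

lemma measurable_snoc {t : ℕ} (x : Traj 1 t) :
    Measurable (fun y : Fin 1 → ℝ => (Fin.snoc x y : Traj 1 (t + 1))) := by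
  refine measurable_pi_lambda _ (fun i => ?_)
  refine Fin.lastCases ?_ (fun i => ?_) i
  · simpa using measurable_id'
  · simp

lemma measurable_snoc_left {t : ℕ} (y : Fin 1 → ℝ) :
    Measurable (fun x : Traj 1 t => (Fin.snoc x y : Traj 1 (t + 1))) := by
  refine measurable_pi_lambda _ (fun i => ?_)
  refine Fin.lastCases ?_ (fun i => ?_) i
  · simp
  · simpa using measurable_pi_apply i

lemma measurable_stepKernel_map_snoc (r : ℝ) (t : ℕ) :
    Measurable (fun x : Traj 1 t =>
      ((stepKernel r t x).map (Fin.snoc x) : Measure (Traj 1 (t + 1)))) := by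
  classical
  have h : (fun x : Traj 1 t => ((stepKernel r t x).map (Fin.snoc x) : Measure (Traj 1 (t + 1))))
      = fun x => if x = 0 then ((zeroStep r t).map (Fin.snoc 0) : Measure (Traj 1 (t + 1)))
          else Measure.dirac (Fin.snoc x 1) := by
    funext x
    by_cases hx : x = 0
    · simp [stepKernel, hx]
    · simp only [stepKernel, hx, if_false]
      exact Measure.map_dirac' (measurable_snoc x) _
  rw [h]
  exact Measurable.ite (measurableSet_singleton 0) measurable_const
    (Measure.measurable_dirac.comp (measurable_snoc_left 1))

/-- Law of the first `t` steps of the chain driven by `stepKernel`. -/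
def chainLaw (r : ℝ) : (t : ℕ) → Measure (Traj 1 t)
  | 0 => Measure.dirac 0
  | t + 1 => (chainLaw r t).bind (fun x => (stepKernel r t x).map (Fin.snoc x))

lemma map_init_chainLaw {r : ℝ} (hr0 : 0 ≤ r) (hr1 : r ≤ 1) (t : ℕ) :
    (chainLaw r (t + 1)).map (restr 1 (Nat.le_succ t)) = chainLaw r t := by
  ext s hs
  rw [Measure.map_apply (measurable_restr _ _) hs, chainLaw,
    Measure.bind_apply (measurable_restr _ _ hs) (measurable_stepKernel_map_snoc r t).aemeasurable]
  have h : ∀ x : Traj 1 t, ((stepKernel r t x).map (Fin.snoc x) : Measure (Traj 1 (t + 1)))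
      (restr 1 (Nat.le_succ t) ⁻¹' s) = s.indicator 1 x := by
    intro x
    have := isProbabilityMeasure_stepKernel hr0 hr1 t x
    rw [Measure.map_apply (measurable_snoc x) (measurable_restr _ _ hs)]
    have hx : (fun y : Fin 1 → ℝ => (Fin.snoc x y : Traj 1 (t + 1))) ⁻¹'
        (restr 1 (Nat.le_succ t) ⁻¹' s) = {_y | x ∈ s} := by
      ext y
      simp [restr_snoc]
    change (stepKernel r t x) ((fun y : Fin 1 → ℝ => (Fin.snoc x y : Traj 1 (t + 1))) ⁻¹'
        (restr 1 (Nat.le_succ t) ⁻¹' s)) = _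
    rw [hx]
    by_cases hxs : x ∈ s <;> simp [hxs]
  simp_rw [h]
  rw [lintegral_indicator_one hs]

lemma map_restr_chainLaw {r : ℝ} (hr0 : 0 ≤ r) (hr1 : r ≤ 1) {t T : ℕ} (h : t ≤ T) :
    (chainLaw r T).map (restr 1 h) = chainLaw r t := by
  induction T, h using Nat.le_induction with
  | base => exact Measure.map_id
  | succ n hn ih =>
    rw [← ih, ← map_init_chainLaw hr0 hr1 n, Measure.map_map (measurable_restr _ _)
      (measurable_restr _ _)]
    rfl

/-- Mass of the `k`-th step path under the chain. -/
def stepMass (r : ℝ) (k : ℕ) : ℝ≥0∞ := ENNReal.ofReal (r ^ (k - 2) * (1 - r))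

/-- The part of the chain law carried by the paths leaving `0`. -/
def leavingLaw (r : ℝ) (t : ℕ) : Measure (Traj 1 t) :=
  ∑ k ∈ Finset.Icc 2 t, stepMass r k • Measure.dirac (stepPath t k)

lemma chainLaw_succ {r : ℝ} (hr0 : 0 ≤ r) (t : ℕ) :
    chainLaw r (t + 1) =
      leavingLaw r (t + 1) + ENNReal.ofReal (r ^ t) • Measure.dirac 0 := by
  induction t with
  | zero =>
    ext s hs
    rw [chainLaw, chainLaw, Measure.dirac_bind (measurable_stepKernel_map_snoc r 0)]
    simp only [stepKernel, zeroStep, if_true]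
    rw [Measure.map_dirac' (measurable_snoc _), snoc_zero_zero]
    simp [leavingLaw]
  | succ t ih =>
    ext s hs
    rw [chainLaw, Measure.bind_apply hs (measurable_stepKernel_map_snoc r _).aemeasurable, ih]
    have h0 : ((stepKernel r (t + 1) 0).map (Fin.snoc 0) : Measure (Traj 1 (t + 2))) s
        = ENNReal.ofReal r * s.indicator 1 0
          + ENNReal.ofReal (1 - r) * s.indicator 1 (stepPath (t + 2) (t + 2)) := by
      rw [stepKernel, if_pos rfl, zeroStep, if_neg (Nat.succ_ne_zero t),
        Measure.map_add _ _ (measurable_snoc _), Measure.map_smul, Measure.map_smul,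
        Measure.map_dirac' (measurable_snoc _), Measure.map_dirac' (measurable_snoc _),
        snoc_zero_zero, snoc_zero_one]
      simp only [Measure.add_apply, Measure.smul_apply, Measure.dirac_apply' _ hs, smul_eq_mul]
    have hk : ∀ k ∈ Finset.Icc 2 (t + 1),
        ((stepKernel r (t + 1) (stepPath (t + 1) k)).map (Fin.snoc (stepPath (t + 1) k)) :
          Measure (Traj 1 (t + 2))) s = s.indicator 1 (stepPath (t + 2) k) := by
      intro k hk
      rw [Finset.mem_Icc] at hk
      rw [stepKernel, if_neg (stepPath_ne_zero (by omega) hk.2),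
        Measure.map_dirac' (measurable_snoc _), snoc_stepPath (by omega), Measure.dirac_apply' _ hs]
    rw [lintegral_add_measure, leavingLaw, lintegral_finsetSum_measure, lintegral_smul_measure,
      lintegral_dirac, h0]
    simp_rw [lintegral_smul_measure, lintegral_dirac]
    rw [Finset.sum_congr rfl (fun k hk' => by rw [hk k hk'])]
    have hmass : stepMass r (t + 2) = ENNReal.ofReal (r ^ t) * ENNReal.ofReal (1 - r) := by
      rw [stepMass, ENNReal.ofReal_mul (by positivity), Nat.add_sub_cancel]
    rw [leavingLaw, pow_succ, ENNReal.ofReal_mul (by positivity)]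
    simp only [Measure.add_apply, Measure.smul_apply, Measure.finsetSum_apply,
      Measure.dirac_apply' _ hs, smul_eq_mul]
    rw [Finset.sum_Icc_succ_top (by omega : 2 ≤ t + 1 + 1), hmass]
    ring

lemma isProbabilityMeasure_chainLaw {r : ℝ} (hr0 : 0 ≤ r) (hr1 : r ≤ 1) (T : ℕ) :
    IsProbabilityMeasure (chainLaw r T) := by
  have h := map_restr_chainLaw hr0 hr1 (Nat.zero_le T)
  have h0 : IsProbabilityMeasure ((chainLaw r T).map (restr 1 (Nat.zero_le T))) := by
    rw [h, chainLaw]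
    infer_instance
  exact (Measure.isProbabilityMeasure_map_iff (measurable_restr _ _).aemeasurable).1 h0

lemma leavingLaw_singleton_stepPath (r : ℝ) {t k : ℕ} (hk : 2 ≤ k) (hkt : k ≤ t) :
    leavingLaw r t {stepPath t k} = stepMass r k := by
  classical
  rw [leavingLaw, Measure.finsetSum_apply, Finset.sum_eq_single k]
  · simp
  · intro j hj hjk
    rw [Finset.mem_Icc] at hj
    have : stepPath t j ≠ stepPath t k := fun h =>
      hjk ((stepPath_eq_iff (by omega) hj.2 (by omega) hkt).1 h)
    simp [this]
  · intro h
    exact absurd (Finset.mem_Icc.2 ⟨hk, hkt⟩) h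

lemma leavingLaw_singleton_zero (r : ℝ) (t : ℕ) : leavingLaw r t {0} = 0 := by
  rw [leavingLaw, Measure.finsetSum_apply]
  refine Finset.sum_eq_zero fun j hj => ?_
  rw [Finset.mem_Icc] at hj
  simp [stepPath_ne_zero (by omega : 1 ≤ j) hj.2]

/-- The chain law with the mass of the zero path moved to the path that jumps immediately. -/
def perturbedLaw (r : ℝ) (T : ℕ) : Measure (Traj 1 T) :=
  leavingLaw r T + ENNReal.ofReal (r ^ (T - 1)) • Measure.dirac (stepPath T 1)

lemma chainLaw_eq {r : ℝ} (hr0 : 0 ≤ r) {T : ℕ} (hT : 1 ≤ T) :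
    chainLaw r T = leavingLaw r T + ENNReal.ofReal (r ^ (T - 1)) • Measure.dirac 0 := by
  obtain ⟨n, rfl⟩ : ∃ n, T = n + 1 := ⟨T - 1, by omega⟩
  exact chainLaw_succ hr0 n

lemma isProbabilityMeasure_perturbedLaw {r : ℝ} (hr0 : 0 ≤ r) (hr1 : r ≤ 1) {T : ℕ}
    (hT : 1 ≤ T) : IsProbabilityMeasure (perturbedLaw r T) := by
  have h := (isProbabilityMeasure_chainLaw hr0 hr1 T).measure_univ
  rw [chainLaw_eq hr0 hT] at h
  refine ⟨?_⟩
  simpa [perturbedLaw] using h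

lemma chainLaw_singleton_zero {r : ℝ} (hr0 : 0 ≤ r) {T : ℕ} (hT : 1 ≤ T) :
    chainLaw r T {0} = ENNReal.ofReal (r ^ (T - 1)) := by
  rw [chainLaw_eq hr0 hT, Measure.add_apply, leavingLaw_singleton_zero]
  simp

lemma chainLaw_singleton_stepPath {r : ℝ} (hr0 : 0 ≤ r) {T k : ℕ} (hk : 2 ≤ k) (hkT : k ≤ T) :
    chainLaw r T {stepPath T k} = stepMass r k := by
  rw [chainLaw_eq hr0 (by omega), Measure.add_apply, leavingLaw_singleton_stepPath r hk hkT]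
  simp [(stepPath_ne_zero (by omega : 1 ≤ k) hkT).symm]

lemma perturbedLaw_singleton_zero (r : ℝ) {T : ℕ} (hT : 1 ≤ T) : perturbedLaw r T {0} = 0 := by
  rw [perturbedLaw, Measure.add_apply, leavingLaw_singleton_zero]
  simp [stepPath_ne_zero le_rfl hT]

lemma perturbedLaw_singleton_stepPath (r : ℝ) {T k : ℕ} (hk : 2 ≤ k) (hkT : k ≤ T) :
    perturbedLaw r T {stepPath T k} = stepMass r k := by
  rw [perturbedLaw, Measure.add_apply, leavingLaw_singleton_stepPath r hk hkT]
  simp [stepPath_lt_ne le_rfl (by omega : 1 ≤ T) (by omega : 1 < k)]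

lemma perturbedLaw_restr_zero {r : ℝ} (hr0 : 0 ≤ r) (hr1 : r ≤ 1) {t T : ℕ} (ht : 1 ≤ t)
    (h : t ≤ T) :
    (perturbedLaw r T).real (restr 1 h ⁻¹' {0}) = r ^ (t - 1) - r ^ (T - 1) := by
  have hms : MeasurableSet (restr 1 h ⁻¹' {(0 : Traj 1 t)}) :=
    measurable_restr _ _ (measurableSet_singleton 0)
  have h1 : chainLaw r T (restr 1 h ⁻¹' {0}) = ENNReal.ofReal (r ^ (t - 1)) := by
    rw [← Measure.map_apply (measurable_restr _ _) (measurableSet_singleton 0),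
      map_restr_chainLaw hr0 hr1, chainLaw_singleton_zero hr0 ht]
  have h2 : perturbedLaw r T (restr 1 h ⁻¹' {0}) = leavingLaw r T (restr 1 h ⁻¹' {0}) := by
    simp [perturbedLaw, hms, restr_stepPath, stepPath_ne_zero le_rfl ht]
  have h3 : (0 : Traj 1 T) ∈ restr 1 h ⁻¹' {(0 : Traj 1 t)} := rfl
  have h4 : leavingLaw r T (restr 1 h ⁻¹' {0}) + ENNReal.ofReal (r ^ (T - 1))
      = ENNReal.ofReal (r ^ (t - 1)) := by
    rw [← h1, chainLaw_eq hr0 (ht.trans h), Measure.add_apply, Measure.smul_apply,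
      Measure.dirac_apply_of_mem h3, smul_eq_mul, mul_one]
  have h5 := congrArg ENNReal.toReal h4
  have hfin : leavingLaw r T (restr 1 h ⁻¹' {0}) ≠ ⊤ := by
    intro htop
    rw [htop, top_add] at h4
    exact ENNReal.ofReal_ne_top h4.symm
  rw [ENNReal.toReal_add hfin ENNReal.ofReal_ne_top, ENNReal.toReal_ofReal (by positivity),
    ENNReal.toReal_ofReal (by positivity)] at h5
  rw [Measure.real, h2]
  linarith

/-- Weight gained when the zero path is left at time `k`; leaving at time `1` has weight `0`. -/
def leaveWeight (r : ℝ) (c : ℕ → ℝ) (k : ℕ) : ℝ :=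
  if k = 1 then 0 else (1 + c k - r) / (1 - r)

open Classical in
/-- The weighting sequence: `1` on the zero path, `leaveWeight` when leaving it, and growth by
the factor `1 + c s` afterwards. -/
def stepWeight (r : ℝ) (c : ℕ → ℝ) : (t : ℕ) → Traj 1 t → ℝ
  | 0, _ => 1
  | t + 1, x =>
    if x = 0 then 1
    else if restr 1 (Nat.le_succ t) x = 0 then leaveWeight r c (t + 1)
    else (1 + c (t + 1)) * stepWeight r c t (restr 1 (Nat.le_succ t) x)

lemma measurable_stepWeight (r : ℝ) (c : ℕ → ℝ) (t : ℕ) : Measurable (stepWeight r c t) := by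
  induction t with
  | zero => exact measurable_const
  | succ t ih =>
    exact Measurable.ite (measurableSet_singleton 0) measurable_const
      (Measurable.ite (measurable_restr _ _ (measurableSet_singleton 0)) measurable_const
        ((ih.comp (measurable_restr _ _)).const_mul _))

lemma stepWeight_zero (r : ℝ) (c : ℕ → ℝ) (t : ℕ) : stepWeight r c t 0 = 1 := by
  cases t <;> simp [stepWeight]

lemma leaveWeight_nonneg {r : ℝ} {c : ℕ → ℝ} (hr1 : r < 1) (hc : ∀ s, 0 ≤ c s) (k : ℕ) :
    0 ≤ leaveWeight r c k := by
  unfold leaveWeight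
  split_ifs
  · exact le_rfl
  · have := hc k
    exact div_nonneg (by linarith) (by linarith)

lemma one_le_leaveWeight {r : ℝ} {c : ℕ → ℝ} (hr1 : r < 1) (hc : ∀ s, 0 ≤ c s) {k : ℕ}
    (hk : k ≠ 1) : 1 ≤ leaveWeight r c k := by
  have := hc k
  rw [leaveWeight, if_neg hk, le_div_iff₀ (by linarith)]
  linarith

lemma stepWeight_nonneg {r : ℝ} {c : ℕ → ℝ} (hr1 : r < 1) (hc : ∀ s, 0 ≤ c s) (t : ℕ)
    (x : Traj 1 t) : 0 ≤ stepWeight r c t x := by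
  induction t with
  | zero => exact zero_le_one
  | succ t ih =>
    have := hc (t + 1)
    have := leaveWeight_nonneg hr1 hc (t + 1)
    have := ih (restr 1 (Nat.le_succ t) x)
    unfold stepWeight
    split_ifs <;> positivity

lemma stepWeight_mono {r : ℝ} {c : ℕ → ℝ} (hr1 : r < 1) (hc : ∀ s, 0 ≤ c s) {t : ℕ} (ht : 1 ≤ t)
    (x : Traj 1 (t + 1)) :
    stepWeight r c t (restr 1 (Nat.le_succ t) x) ≤ stepWeight r c (t + 1) x := by
  rw [stepWeight]
  split_ifs with h1 h2
  · rw [h1]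
    exact (stepWeight_zero r c t).le
  · rw [h2, stepWeight_zero]
    exact one_le_leaveWeight hr1 hc (by omega)
  · have := hc (t + 1)
    have := stepWeight_nonneg hr1 hc t (restr 1 (Nat.le_succ t) x)
    nlinarith

lemma lintegral_stepWeight_stepKernel {r : ℝ} {c : ℕ → ℝ} (hr0 : 0 ≤ r) (hr1 : r < 1)
    (hc : ∀ s, 0 ≤ c s) {t : ℕ} (ht : 1 ≤ t) (x : Traj 1 t) :
    ∫⁻ y, ENNReal.ofReal (stepWeight r c (t + 1) (Fin.snoc x y)) ∂(stepKernel r t x)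
      = ENNReal.ofReal ((1 + c (t + 1)) * stepWeight r c t x) := by
  by_cases hx : x = 0
  · subst hx
    rw [stepKernel, if_pos rfl, zeroStep, if_neg (by omega), lintegral_add_measure,
      lintegral_smul_measure, lintegral_smul_measure, lintegral_dirac, lintegral_dirac,
      snoc_zero_zero, stepWeight_zero, stepWeight_zero, snoc_zero_one, stepWeight,
      if_neg (stepPath_ne_zero (by omega) le_rfl), restr_stepPath,
      if_pos (stepPath_eq_zero (Nat.lt_succ_self t))]
    have := leaveWeight_nonneg hr1 hc (t + 1)
    simp only [smul_eq_mul]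
    rw [← ENNReal.ofReal_mul hr0, ← ENNReal.ofReal_mul (by linarith),
      ← ENNReal.ofReal_add (by linarith) (mul_nonneg (by linarith) this)]
    congr 1
    rw [leaveWeight, if_neg (by omega), mul_div_cancel₀ _ (by linarith)]
    ring
  · rw [stepKernel, if_neg hx, lintegral_dirac, stepWeight, restr_snoc, if_neg hx, if_neg]
    intro h
    apply hx
    rw [← restr_snoc x 1, h]
    rfl

lemma stepWeight_stepPath (r : ℝ) (c : ℕ → ℝ) {k T : ℕ} (hk : 1 ≤ k) (hkT : k ≤ T) :
    stepWeight r c T (stepPath T k)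
      = leaveWeight r c k * ∏ s ∈ Finset.Icc (k + 1) T, (1 + c s) := by
  induction T, hkT using Nat.le_induction with
  | base =>
    obtain ⟨n, rfl⟩ : ∃ n, k = n + 1 := ⟨k - 1, by omega⟩
    rw [stepWeight, if_neg (stepPath_ne_zero hk le_rfl), restr_stepPath,
      if_pos (stepPath_eq_zero (Nat.lt_succ_self n))]
    simp
  | succ n hn ih =>
    rw [stepWeight, if_neg (stepPath_ne_zero hk (by omega)), restr_stepPath,
      if_neg (stepPath_ne_zero hk hn), ih, Finset.prod_Icc_succ_top (by omega)]
    ring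

/-- A lower bound for the part of a weighted cost carried by finitely many values of `p`. -/
lemma sum_mul_measure_le_setLIntegral {ι α Ω : Type*} [MeasurableSpace α]
    [MeasurableSingletonClass α] [MeasurableSpace Ω] {π : Measure Ω} {p : Ω → α}
    (hp : Measurable p) {W : α → ℝ≥0∞} (hW : Measurable W) (I : Finset ι) {g : ι → α}
    (hg : Set.InjOn g I) (S : Set Ω) :
    ∑ k ∈ I, W (g k) * π (p ⁻¹' {g k} ∩ S) ≤ ∫⁻ q in S, W (p q) ∂π := by
  classical
  calc ∑ k ∈ I, W (g k) * π (p ⁻¹' {g k} ∩ S)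
      = ∑ x ∈ I.image g, W x * ((π.restrict S).map p) {x} := by
        rw [Finset.sum_image hg]
        refine Finset.sum_congr rfl fun k _ => ?_
        rw [Measure.map_apply hp (measurableSet_singleton _),
          Measure.restrict_apply (hp (measurableSet_singleton _))]
    _ = ∫⁻ x in (I.image g : Finset α), W x ∂((π.restrict S).map p) :=
        (lintegral_finset _ _).symm
    _ ≤ ∫⁻ x, W x ∂((π.restrict S).map p) := setLIntegral_le_lintegral _ _
    _ = ∫⁻ q in S, W (p q) ∂π := lintegral_map hW hp

section Coupling

variable {α : Type*} [MeasurableSpace α] {μ ν : Measure α} {π : Measure (α × α)}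

lemma Cpl.measure_fst_preimage (hπ : π ∈ Cpl μ ν) {s : Set α} (hs : MeasurableSet s) :
    π (Prod.fst ⁻¹' s) = μ s := by
  rw [← hπ.2.1, Measure.map_apply measurable_fst hs]

lemma Cpl.measure_snd_preimage (hπ : π ∈ Cpl μ ν) {s : Set α} (hs : MeasurableSet s) :
    π (Prod.snd ⁻¹' s) = ν s := by
  rw [← hπ.2.2, Measure.map_apply measurable_snd hs]

end Coupling

lemma stepMass_toReal {r : ℝ} (hr0 : 0 ≤ r) (hr1 : r ≤ 1) (k : ℕ) :
    (stepMass r k).toReal = r ^ (k - 2) * (1 - r) :=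
  ENNReal.toReal_ofReal (mul_nonneg (by positivity) (by linarith))

/-- Under a bicausal coupling the two paths can agree on `stepPath T k` only with small
probability. -/
lemma BCpl.measureReal_stepPath_le {r : ℝ} (hr0 : 0 < r) (hr1 : r < 1) {T k : ℕ} (hk : 2 ≤ k)
    (hkT : k ≤ T) {π : Measure (Traj 1 T × Traj 1 T)}
    (hπ : π ∈ BCpl (perturbedLaw r T) (chainLaw r T)) :
    π.real {(stepPath T k, stepPath T k)} ≤ (1 - r) * (r ^ (k - 2) - r ^ (T - 1)) := by
  obtain ⟨hcpl, hfin, hbc⟩ := hπ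
  obtain ⟨t, rfl⟩ : ∃ t, k = t + 1 := ⟨k - 1, by omega⟩
  have htT : t ≤ T := by omega
  have hind := (hbc t (by omega) hkT).2
  have hf : Measurable (fun ω : Traj 1 T × Traj 1 T => restr 1 htT ω.2) :=
    (measurable_restr 1 htT).comp measurable_snd
  set A : Set (Traj 1 T × Traj 1 T) := (fun ω => restr 1 htT ω.2) ⁻¹' {0} with hA
  set B : Set (Traj 1 T × Traj 1 T) := (fun ω => restr 1 htT ω.1) ⁻¹' {0} with hB
  set C : Set (Traj 1 T × Traj 1 T) := Prod.snd ⁻¹' {stepPath T (t + 1)} with hC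
  have hAC : A ∩ C = C := by
    refine Set.inter_eq_right.2 fun ω hω => ?_
    have : ω.2 = stepPath T (t + 1) := hω
    simp only [hA, Set.mem_preimage, this, restr_stepPath]
    exact stepPath_eq_zero (Nat.lt_succ_self t)
  have hkey := CondIndep.measureReal_inter_fiber_mul hf (sigmaX_le 1 T htT) (sigmaY_le 1 T le_rfl)
    hind (B := B) (C := C) ⟨{0}, measurableSet_singleton 0, rfl⟩
    ⟨{stepPath T (t + 1)}, measurableSet_singleton _, rfl⟩ 0
  change π.real (A ∩ (B ∩ C)) * π.real A = π.real (A ∩ B) * π.real (A ∩ C) at hkey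
  have hAr : π.real A = r ^ (t - 1) := by
    have : A = Prod.snd ⁻¹' (restr 1 htT ⁻¹' {0}) := rfl
    rw [this, Measure.real, Cpl.measure_snd_preimage hcpl
      (measurable_restr _ _ (measurableSet_singleton 0)),
      ← Measure.map_apply (measurable_restr _ _) (measurableSet_singleton 0),
      map_restr_chainLaw hr0.le hr1.le, chainLaw_singleton_zero hr0.le (by omega),
      ENNReal.toReal_ofReal (by positivity)]
  have hCr : π.real C = r ^ (t - 1) * (1 - r) := by
    rw [Measure.real, Cpl.measure_snd_preimage hcpl (measurableSet_singleton _),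
      chainLaw_singleton_stepPath hr0.le hk hkT, stepMass_toReal hr0.le hr1.le]
    rfl
  have hBr : π.real B = r ^ (t - 1) - r ^ (T - 1) := by
    have : B = Prod.fst ⁻¹' (restr 1 htT ⁻¹' {0}) := rfl
    rw [← perturbedLaw_restr_zero hr0.le hr1.le (by omega) htT, this, Measure.real,
      Cpl.measure_fst_preimage hcpl (measurable_restr _ _ (measurableSet_singleton 0))]
    rfl
  have hABr : π.real (A ∩ B) ≤ r ^ (t - 1) - r ^ (T - 1) :=
    (measureReal_mono Set.inter_subset_right).trans hBr.le
  have hsub : ({(stepPath T (t + 1), stepPath T (t + 1))} : Set (Traj 1 T × Traj 1 T))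
      ⊆ A ∩ (B ∩ C) := by
    rintro _ rfl
    exact ⟨stepPath_eq_zero (Nat.lt_succ_self t), stepPath_eq_zero (Nat.lt_succ_self t), rfl⟩
  refine (measureReal_mono hsub).trans ?_
  rw [hAC, hAr, hCr] at hkey
  have hpos : 0 < r ^ (t - 1) := by positivity
  have hcancel : π.real (A ∩ (B ∩ C)) = π.real (A ∩ B) * (1 - r) := by
    apply mul_right_cancel₀ hpos.ne'
    rw [hkey]
    ring
  rw [hcancel, mul_comm]
  exact mul_le_mul_of_nonneg_left hABr (by linarith)

lemma BCpl.ofReal_le_measure_offDiag {r : ℝ} (hr0 : 0 < r) (hr1 : r < 1) {T k : ℕ} (hk : 2 ≤ k)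
    (hkT : k ≤ T) {π : Measure (Traj 1 T × Traj 1 T)}
    (hπ : π ∈ BCpl (perturbedLaw r T) (chainLaw r T)) {p : Traj 1 T × Traj 1 T → Traj 1 T}
    (hp : p = Prod.fst ∨ p = Prod.snd) :
    ENNReal.ofReal ((1 - r) * r ^ (T - 1)) ≤
      π (p ⁻¹' {stepPath T k} ∩ {q | q.1 ≠ q.2}) := by
  have hprob : IsProbabilityMeasure π := hπ.1.1
  have hmass : π.real (p ⁻¹' {stepPath T k}) = r ^ (k - 2) * (1 - r) := by
    rw [← stepMass_toReal hr0.le hr1.le, Measure.real]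
    rcases hp with rfl | rfl
    · rw [Cpl.measure_fst_preimage hπ.1 (measurableSet_singleton _),
        perturbedLaw_singleton_stepPath r hk hkT]
    · rw [Cpl.measure_snd_preimage hπ.1 (measurableSet_singleton _),
        chainLaw_singleton_stepPath hr0.le hk hkT]
  have hsub : p ⁻¹' {stepPath T k} ⊆
      p ⁻¹' {stepPath T k} ∩ {q | q.1 ≠ q.2} ∪ {(stepPath T k, stepPath T k)} := by
    rintro ⟨x, y⟩ hq
    by_cases hxy : x = y
    · right
      subst hxy
      rcases hp with rfl | rfl <;> simpa using hq
    · exact Or.inl ⟨hq, hxy⟩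
  have h1 := (measureReal_mono (μ := π) hsub).trans (measureReal_union_le _ _)
  have h2 := BCpl.measureReal_stepPath_le hr0 hr1 hk hkT hπ
  rw [ENNReal.ofReal_le_iff_le_toReal (measure_ne_top _ _)]
  change _ ≤ π.real _
  nlinarith

lemma Cpl.ofReal_le_measure_offDiag_zero {r : ℝ} (hr0 : 0 ≤ r) {T : ℕ} (hT : 1 ≤ T)
    {π : Measure (Traj 1 T × Traj 1 T)} (hπ : π ∈ Cpl (perturbedLaw r T) (chainLaw r T)) :
    ENNReal.ofReal (r ^ (T - 1)) ≤ π (Prod.snd ⁻¹' {0} ∩ {q | q.1 ≠ q.2}) := by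
  have hsub : (Prod.snd ⁻¹' {0} : Set (Traj 1 T × Traj 1 T)) ⊆
      Prod.snd ⁻¹' {0} ∩ {q | q.1 ≠ q.2} ∪ Prod.fst ⁻¹' {0} := by
    rintro ⟨x, y⟩ hq
    by_cases hxy : x = y
    · right
      subst hxy
      exact hq
    · exact Or.inl ⟨hq, hxy⟩
  calc ENNReal.ofReal (r ^ (T - 1)) = π (Prod.snd ⁻¹' {0}) := by
        rw [Cpl.measure_snd_preimage hπ (measurableSet_singleton 0), chainLaw_singleton_zero hr0 hT]
    _ ≤ π (Prod.snd ⁻¹' {0} ∩ {q | q.1 ≠ q.2}) + π (Prod.fst ⁻¹' {0}) :=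
        (measure_mono hsub).trans (measure_union_le _ _)
    _ = _ := by
        rw [Cpl.measure_fst_preimage hπ (measurableSet_singleton 0),
          perturbedLaw_singleton_zero r hT, add_zero]

lemma le_TVw_perturbedLaw_chainLaw {r : ℝ} (hr0 : 0 ≤ r) (c : ℕ → ℝ) {T : ℕ} (hT : 1 ≤ T) :
    ENNReal.ofReal (r ^ (T - 1)) ≤
      TVw (stepWeight r c T) (perturbedLaw r T) (chainLaw r T) := by
  refine le_iInf₂ fun π hπ => ?_
  have h := sum_mul_measure_le_setLIntegral (π := π) measurable_snd
    (measurable_stepWeight r c T).ennreal_ofReal {()} (g := fun _ => 0) (by simp)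
    {q : Traj 1 T × Traj 1 T | q.1 ≠ q.2}
  simp only [Finset.sum_singleton, stepWeight_zero, ENNReal.ofReal_one, one_mul] at h
  exact (Cpl.ofReal_le_measure_offDiag_zero hr0 hT hπ).trans
    (h.trans (lintegral_mono fun q => le_add_self))

lemma TVw_perturbedLaw_chainLaw_le {r : ℝ} (hr0 : 0 ≤ r) (hr1 : r ≤ 1) (c : ℕ → ℝ) {T : ℕ}
    (hT : 1 ≤ T) :
    TVw (stepWeight r c T) (perturbedLaw r T) (chainLaw r T) ≤ ENNReal.ofReal (r ^ (T - 1)) := by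
  set π : Measure (Traj 1 T × Traj 1 T) :=
    (leavingLaw r T).map (fun x => (x, x))
      + ENNReal.ofReal (r ^ (T - 1)) • Measure.dirac (stepPath T 1, 0) with hπ
  have hdiag : Measurable (fun x : Traj 1 T => (x, x)) := measurable_id.prodMk measurable_id
  have hfst : π.map Prod.fst = perturbedLaw r T := by
    rw [hπ, Measure.map_add _ _ measurable_fst, Measure.map_map measurable_fst hdiag,
      Measure.map_smul, Measure.map_dirac' measurable_fst, perturbedLaw]
    congr 1
    exact Measure.map_id
  have hsnd : π.map Prod.snd = chainLaw r T := by
    rw [hπ, Measure.map_add _ _ measurable_snd, Measure.map_map measurable_snd hdiag,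
      Measure.map_smul, Measure.map_dirac' measurable_snd, chainLaw_eq hr0 hT]
    congr 1
    exact Measure.map_id
  have hprob : IsProbabilityMeasure π := by
    have := isProbabilityMeasure_chainLaw hr0 hr1 T
    rw [← hsnd] at this
    exact (Measure.isProbabilityMeasure_map_iff measurable_snd.aemeasurable).1 this
  have hS : MeasurableSet {q : Traj 1 T × Traj 1 T | q.1 ≠ q.2} :=
    (measurableSet_eq_fun measurable_fst measurable_snd).compl
  have hw1 : stepWeight r c T (stepPath T 1) = 0 := by
    rw [stepWeight_stepPath r c le_rfl hT, leaveWeight, if_pos rfl, zero_mul]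
  have hm : Measurable (fun q : Traj 1 T × Traj 1 T =>
      ENNReal.ofReal (stepWeight r c T q.1) + ENNReal.ofReal (stepWeight r c T q.2)) :=
    ((measurable_stepWeight r c T).comp measurable_fst).ennreal_ofReal.add
      ((measurable_stepWeight r c T).comp measurable_snd).ennreal_ofReal
  refine (iInf₂_le π ⟨hprob, hfst, hsnd⟩).trans ?_
  rw [← lintegral_indicator hS, hπ, lintegral_add_measure, lintegral_map (hm.indicator hS) hdiag,
    lintegral_smul_measure, lintegral_dirac]
  simp [stepPath_ne_zero le_rfl hT, hw1, stepWeight_zero]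

lemma le_ATVw_perturbedLaw_chainLaw {r : ℝ} (hr0 : 0 < r) (hr1 : r < 1) {c : ℕ → ℝ}
    (hc : ∀ s, 0 ≤ c s) {T : ℕ} (hT : 1 ≤ T) :
    ENNReal.ofReal
        (1 + 2 * ∑ k ∈ Finset.Icc 2 T, (1 - r) * stepWeight r c T (stepPath T k))
      * ENNReal.ofReal (r ^ (T - 1))
      ≤ ATVw (stepWeight r c T) (perturbedLaw r T) (chainLaw r T) := by
  refine le_iInf₂ fun π hπ => ?_
  set S : Set (Traj 1 T × Traj 1 T) := {q | q.1 ≠ q.2} with hS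
  set W : Traj 1 T → ℝ≥0∞ := fun x => ENNReal.ofReal (stepWeight r c T x) with hW
  have hWm : Measurable W := (measurable_stepWeight r c T).ennreal_ofReal
  have hinj' : Set.InjOn (stepPath T) (Finset.Icc 2 (T + 1) : Finset ℕ) := by
    intro j hj k hk h
    rw [Finset.mem_coe, Finset.mem_Icc] at hj hk
    rcases lt_trichotomy j k with hlt | heq | hgt
    · exact absurd h (stepPath_lt_ne (by omega) (by omega) hlt)
    · exact heq
    · exact absurd h.symm (stepPath_lt_ne (by omega) (by omega) hgt)
  have hinj : Set.InjOn (stepPath T) (Finset.Icc 2 T : Finset ℕ) :=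
    hinj'.mono (by exact_mod_cast Finset.Icc_subset_Icc_right (Nat.le_succ T))
  have hx := sum_mul_measure_le_setLIntegral (π := π) measurable_fst hWm (Finset.Icc 2 T) hinj S
  have hy := sum_mul_measure_le_setLIntegral (π := π) measurable_snd hWm (Finset.Icc 2 (T + 1))
    hinj' S
  rw [Finset.sum_Icc_succ_top (by omega), stepPath_eq_zero (Nat.lt_succ_self T)] at hy
  have hoff : ∀ p : Traj 1 T × Traj 1 T → Traj 1 T, p = Prod.fst ∨ p = Prod.snd →
      ENNReal.ofReal (∑ k ∈ Finset.Icc 2 T, (1 - r) * stepWeight r c T (stepPath T k))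
        * ENNReal.ofReal (r ^ (T - 1))
      ≤ ∑ k ∈ Finset.Icc 2 T, W (stepPath T k) * π (p ⁻¹' {stepPath T k} ∩ S) := by
    intro p hp
    rw [ENNReal.ofReal_sum_of_nonneg fun k _ =>
      mul_nonneg (by linarith) (stepWeight_nonneg hr1 hc _ _), Finset.sum_mul]
    refine Finset.sum_le_sum fun k hk => ?_
    rw [Finset.mem_Icc] at hk
    refine le_trans (le_of_eq ?_) (mul_le_mul_right
      (BCpl.ofReal_le_measure_offDiag hr0 hr1 hk.1 hk.2 hπ hp) _)
    rw [hW, ENNReal.ofReal_mul (by linarith), ENNReal.ofReal_mul (by linarith)]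
    ring
  have hzero : ENNReal.ofReal (r ^ (T - 1)) ≤ W 0 * π (Prod.snd ⁻¹' {0} ∩ S) := by
    simp only [hW, stepWeight_zero, ENNReal.ofReal_one, one_mul]
    exact Cpl.ofReal_le_measure_offDiag_zero hr0.le hT hπ.1
  have hnn : 0 ≤ ∑ k ∈ Finset.Icc 2 T, (1 - r) * stepWeight r c T (stepPath T k) :=
    Finset.sum_nonneg fun k _ => mul_nonneg (by linarith) (stepWeight_nonneg hr1 hc _ _)
  change _ ≤ ∫⁻ q in S, (W q.1 + W q.2) ∂π
  rw [lintegral_add_left (f := fun q : Traj 1 T × Traj 1 T => W q.1) (hWm.comp measurable_fst)]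
  refine le_trans (le_of_eq ?_) (add_le_add ((hoff _ (Or.inl rfl)).trans hx)
    ((add_le_add (hoff _ (Or.inr rfl)) hzero).trans hy))
  rw [ENNReal.ofReal_add zero_le_one (by linarith), ENNReal.ofReal_one, two_mul,
    ENNReal.ofReal_add hnn hnn]
  ring

/-- The weight of the leaving paths, up to an error of order `r`. -/
lemma sum_stepWeight_stepPath {r : ℝ} (hr1 : r < 1) (c : ℕ → ℝ) (T : ℕ) :
    ∑ k ∈ Finset.Icc 2 T, (1 - r) * stepWeight r c T (stepPath T k)
      = (∑ t ∈ Finset.Icc 1 (T - 1), ∏ s ∈ Finset.Icc (t + 1) T, (1 + c s))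
        - r * ∑ k ∈ Finset.Icc 2 T, ∏ s ∈ Finset.Icc (k + 1) T, (1 + c s) := by
  have hshift : ∑ t ∈ Finset.Icc 1 (T - 1), ∏ s ∈ Finset.Icc (t + 1) T, (1 + c s)
      = ∑ k ∈ Finset.Icc 2 T, ∏ s ∈ Finset.Icc k T, (1 + c s) := by
    refine Finset.sum_bij (fun t _ => t + 1) ?_ ?_ ?_ ?_
    · intro t ht
      rw [Finset.mem_Icc] at ht ⊢
      omega
    · intro a _ b _ h
      omega
    · intro b hb
      rw [Finset.mem_Icc] at hb
      exact ⟨b - 1, Finset.mem_Icc.2 (by omega), by omega⟩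
    · intro t _
      rfl
  rw [hshift, Finset.mul_sum, ← Finset.sum_sub_distrib]
  refine Finset.sum_congr rfl fun k hk => ?_
  rw [Finset.mem_Icc] at hk
  rw [stepWeight_stepPath r c (by omega) hk.2, leaveWeight, if_neg (by omega),
    ← Finset.insert_Icc_add_one_left_eq_Icc hk.2, Finset.prod_insert (by simp)]
  have : (1 - r) ≠ 0 := by linarith
  field_simp

lemma lintegral_leavingLaw_lt_top (r : ℝ) {T : ℕ} (f : Traj 1 T → ℝ) :
    ∫⁻ x, ENNReal.ofReal (f x) ∂(leavingLaw r T) < ⊤ := by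
  rw [leavingLaw, lintegral_finsetSum_measure]
  refine ENNReal.sum_lt_top.2 fun k _ => ?_
  rw [lintegral_smul_measure, lintegral_dirac]
  exact ENNReal.mul_lt_top ENNReal.ofReal_lt_top ENNReal.ofReal_lt_top

/-- Sharpness of the constant in the weighted bound: for every `T ≥ 1`,
constants `c_2, …, c_T ≥ 0` and `ε > 0`, there are a weighting function `w`, a weighting
sequence `(w_t)`, probability measures `μ, ν` and a disintegration `κ` of `ν`, satisfying the
conditional weighting assumption, with `0 < TV_w(μ,ν) < ∞` and
`ATV_w(μ,ν) ≥ (1 + 2 ∑_{t=1}^{T-1} ∏_{s=t+1}^{T}(1+c_s) - ε) TV_w(μ,ν)`. -/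
theorem weighted_atv_tv_constant_sharp (T : ℕ) (hT : 1 ≤ T)
    (c : ℕ → ℝ) (hc : ∀ t, 2 ≤ t → t ≤ T → 0 ≤ c t) (ε : ℝ) (hε : 0 < ε) :
    ∃ (w : Traj 1 T → ℝ) (w' : ∀ t : ℕ, Traj 1 t → ℝ)
      (μ ν : Measure (Traj 1 T)) (κ : ∀ t : ℕ, Traj 1 t → Measure (Fin 1 → ℝ)),
      Measurable w ∧ (∀ x, 0 ≤ w x) ∧ w' T = w ∧
      (∀ t, Measurable (w' t)) ∧ (∀ t x, 0 ≤ w' t x) ∧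
      IsProbabilityMeasure μ ∧ IsProbabilityMeasure ν ∧
      (∫⁻ x, ENNReal.ofReal (w x) ∂μ) + (∫⁻ x, ENNReal.ofReal (w x) ∂ν) < ⊤ ∧
      (∀ t, Measurable (κ t)) ∧ (∀ t x, IsProbabilityMeasure (κ t x)) ∧
      (∀ t, ∀ h : t + 1 ≤ T,
        ν.map (restr 1 h) =
          (ν.map (restr 1 (Nat.le_of_succ_le h))).bind (fun x => (κ t x).map (Fin.snoc x))) ∧
      (∀ᵐ x ∂ν, ∀ t, 1 ≤ t → ∀ h : t + 1 ≤ T,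
        w' t (restr 1 (Nat.le_of_succ_le h) x) ≤ w' (t + 1) (restr 1 h x)) ∧
      (∀ᵐ x ∂ν, ∀ t, 1 ≤ t → ∀ h : t + 1 ≤ T,
        (∫⁻ y, ENNReal.ofReal (w' (t + 1) (Fin.snoc (restr 1 (Nat.le_of_succ_le h) x) y))
            ∂(κ t (restr 1 (Nat.le_of_succ_le h) x)))
          ≤ ENNReal.ofReal ((1 + c (t + 1)) * w' t (restr 1 (Nat.le_of_succ_le h) x))) ∧
      0 < TVw w μ ν ∧ TVw w μ ν < ⊤ ∧
      ENNReal.ofReal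
          (1 + 2 * (∑ t ∈ Finset.Icc 1 (T - 1), ∏ s ∈ Finset.Icc (t + 1) T, (1 + c s)) - ε)
        * TVw w μ ν ≤ ATVw w μ ν := by
  set c' : ℕ → ℝ := fun s => max (c s) 0 with hc'
  have hc'0 : ∀ s, 0 ≤ c' s := fun s => le_max_right _ _
  have hcc' : ∀ s, 2 ≤ s → s ≤ T → c' s = c s := fun s h1 h2 => max_eq_left (hc s h1 h2)
  set Q : ℝ := ∑ k ∈ Finset.Icc 2 T, ∏ s ∈ Finset.Icc (k + 1) T, (1 + c' s) with hQ
  have hQ0 : 0 ≤ Q := Finset.sum_nonneg fun k _ => Finset.prod_nonneg fun s _ => by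
    linarith [hc'0 s]
  set r : ℝ := ε / (ε + 1 + 2 * Q) with hr
  have hden : 0 < ε + 1 + 2 * Q := by linarith
  have hr0 : 0 < r := div_pos hε hden
  have hr1 : r < 1 := by
    rw [hr, div_lt_one hden]
    linarith
  have hrQ : 2 * (r * Q) ≤ ε := by
    have : r * (ε + 1 + 2 * Q) = ε := div_mul_cancel₀ ε hden.ne'
    nlinarith
  have hTV : TVw (stepWeight r c' T) (perturbedLaw r T) (chainLaw r T)
      = ENNReal.ofReal (r ^ (T - 1)) :=
    le_antisymm (TVw_perturbedLaw_chainLaw_le hr0.le hr1.le c' hT)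
      (le_TVw_perturbedLaw_chainLaw hr0.le c' hT)
  refine ⟨stepWeight r c' T, stepWeight r c', perturbedLaw r T, chainLaw r T, stepKernel r,
    measurable_stepWeight r c' T, stepWeight_nonneg hr1 hc'0 T, rfl, measurable_stepWeight r c',
    stepWeight_nonneg hr1 hc'0, isProbabilityMeasure_perturbedLaw hr0.le hr1.le hT,
    isProbabilityMeasure_chainLaw hr0.le hr1.le T, ?_, measurable_stepKernel r,
    isProbabilityMeasure_stepKernel hr0.le hr1.le, ?_, ?_, ?_, ?_, ?_, ?_⟩
  · have := lintegral_leavingLaw_lt_top r (stepWeight r c' T)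
    rw [perturbedLaw, chainLaw_eq hr0.le hT]
    simp only [lintegral_add_measure, lintegral_smul_measure, lintegral_dirac, smul_eq_mul,
      ENNReal.add_lt_top]
    exact ⟨⟨this, ENNReal.mul_lt_top ENNReal.ofReal_lt_top ENNReal.ofReal_lt_top⟩,
      this, ENNReal.mul_lt_top ENNReal.ofReal_lt_top ENNReal.ofReal_lt_top⟩
  · intro t h
    rw [map_restr_chainLaw hr0.le hr1.le, map_restr_chainLaw hr0.le hr1.le, chainLaw]
  · exact Filter.Eventually.of_forall fun x t ht h => stepWeight_mono hr1 hc'0 ht (restr 1 h x)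
  · refine Filter.Eventually.of_forall fun x t ht h => ?_
    rw [lintegral_stepWeight_stepKernel hr0.le hr1 hc'0 ht, hcc' (t + 1) (by omega) h]
  · rw [hTV]
    exact ENNReal.ofReal_pos.2 (by positivity)
  · rw [hTV]
    exact ENNReal.ofReal_lt_top
  · rw [hTV]
    refine le_trans ?_ (le_ATVw_perturbedLaw_chainLaw hr0 hr1 hc'0 hT)
    gcongr
    rw [sum_stepWeight_stepPath hr1 c' T]
    have hprod : ∑ t ∈ Finset.Icc 1 (T - 1), ∏ s ∈ Finset.Icc (t + 1) T, (1 + c' s)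
        = ∑ t ∈ Finset.Icc 1 (T - 1), ∏ s ∈ Finset.Icc (t + 1) T, (1 + c s) := by
      refine Finset.sum_congr rfl fun t ht => Finset.prod_congr rfl fun s hs => ?_
      rw [Finset.mem_Icc] at ht hs
      rw [hcc' s (by omega) hs.2]
    rw [hprod]
    linarith

end
end
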